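/- Let C ⊂ ℙ² be a plane curve of degree d ≥ 2 defined over a finite field 𝔽_q of characteristic p by a homogeneous polynomial F ∈ 𝔽_q[x,y,z] of degree d that is irreducible over 𝔽_q. If p > d and q ≥ d²(d-1)⁶, then C is not tangent-filling over 𝔽_q. -/

import Mathlib

open MvPolynomial

/-- `Q` is a smooth point (given by a nonzero coordinate representative) of the plane
curve defined by the homogeneous polynomial `F`. -/
def SmoothPoint {K : Type*} [CommRing K] (F : MvPolynomial (Fin 3) K) (Q : Fin 3 → K) : Prop :=
  Q ≠ 0 ∧ eval Q F = 0 ∧ ∃ i : Fin 3, eval Q (pderiv i F) ≠ 0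

/-- The point with coordinates `P` lies on the tangent line to the curve `{F = 0}` at the
point with coordinates `Q`. -/
def OnTangentLine {K : Type*} [CommRing K] (F : MvPolynomial (Fin 3) K) (Q P : Fin 3 → K) : Prop :=
  eval Q (pderiv 0 F) * P 0 + eval Q (pderiv 1 F) * P 1 + eval Q (pderiv 2 F) * P 2 = 0

/-- The curve `{F = 0}` is tangent-filling: every point of the projective plane lies on the
tangent line at some smooth point of the curve. -/
def TangentFilling {K : Type*} [CommRing K] (F : MvPolynomial (Fin 3) K) : Prop :=
  ∀ P : Fin 3 → K, P ≠ 0 → ∃ Q : Fin 3 → K, SmoothPoint F Q ∧ OnTangentLine F Q P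


/-- distinct orders -/
lemma distinct_orders {K : Type*} [Field K] {ι : Type*} (s : Finset ι) (o : ι → ℕ)
    (ho : Set.InjOn o s) (f : ι → PowerSeries K)
    (hf : ∀ i ∈ s, (f i).order = (o i : ℕ∞)) (c : ι → K) (e : ℕ)
    (hdvd : (PowerSeries.X : PowerSeries K) ^ e ∣ ∑ i ∈ s, c i • f i) :
    ∀ i ∈ s, o i < e → c i = 0 := by
  classical
  by_contra! hcon
  obtain ⟨i0, hi0, hlt0, hc0⟩ := hcon
  let t := s.filter (fun i => c i ≠ 0)
  have hne : t.Nonempty := ⟨i0, by simp [t, hi0, hc0]⟩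
  obtain ⟨i, hi, hmin⟩ := t.exists_min_image o hne
  have hi' : i ∈ s ∧ c i ≠ 0 := by simpa [t] using hi
  have hlt : o i < e := lt_of_le_of_lt (hmin i0 (by simp [t, hi0, hc0])) hlt0
  have h1 := (PowerSeries.X_pow_dvd_iff.mp hdvd) (o i) hlt
  rw [map_sum, Finset.sum_eq_single i] at h1
  · have h2 := (PowerSeries.order_eq_nat.mp (hf i hi'.1)).1
    simp [hi'.2] at h1
    exact h2 h1
  · intro j hj hji
    by_cases hcj : c j = 0
    · simp [hcj]
    · have h3 := hmin j (by simp [t, hj, hcj])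
      have h4 : o i ≠ o j := fun h => hji (ho hj hi'.1 h.symm)
      have h5 := (PowerSeries.order_eq_nat.mp (hf j hj)).2 (o i) (by omega)
      simp [h5]
  · intro h; exact absurd hi'.1 h

lemma finrank_homog (K : Type*) [Field K] (n : ℕ) :
    Module.finrank K (homogeneousSubmodule (Fin 3) K n) = (n + 2).choose 2 := by
  classical
  rw [homogeneousSubmodule_eq_finsupp_supported]
  have e := AddMonoidAlgebra.supportedEquivFinsupp (R := K) (S := K) {d : Fin 3 →₀ ℕ | d.degree = n}
  have hset : {d : Fin 3 →₀ ℕ | d.degree = n} =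
      ((Finset.finsuppAntidiag (Finset.univ : Finset (Fin 3)) n : Finset (Fin 3 →₀ ℕ)) : Set _) := by
    ext d
    simp [Finset.mem_finsuppAntidiag, Finsupp.degree_eq_sum]
  have : Module.finrank K (AddMonoidAlgebra.supported K K {d : Fin 3 →₀ ℕ | d.degree = n}) = 
     Module.finrank K ({d : Fin 3 →₀ ℕ | d.degree = n} →₀ K) := LinearEquiv.finrank_eq e
  refine Eq.trans this ?_
  rw [hset, Module.finrank_finsupp_self]
  simp only [Fintype.card_coe, Finset.coe_sort_coe]
  rw [Finset.card_finsuppAntidiag_nat_eq_choose, Finset.card_univ, Fintype.card_fin]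
  rw [show 3 + n - 1 = n + 2 by omega]
  exact Nat.choose_symm_add

instance finite_homog (K : Type*) [Field K] (n : ℕ) :
    FiniteDimensional K (homogeneousSubmodule (Fin 3) K n) := by
  have := finrank_homog K n
  apply Module.finite_of_finrank_pos
  rw [this]; exact Nat.choose_pos (by omega)

lemma two_mul_choose_two (n : ℕ) : 2 * (n + 2).choose 2 = (n + 2) * (n + 1) := by
  have := Nat.triangle_succ (n+1)
  rw [Nat.choose_two_right, Nat.mul_div_cancel']
  · rfl
  · exact (Nat.even_mul_pred_self (n+2)).two_dvd

lemma homog_factor {K : Type*} [Field K] {F c : MvPolynomial (Fin 3) K} {d n : ℕ}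
    (hF : F.IsHomogeneous d) (hF0 : F ≠ 0) (h : (F * c).IsHomogeneous (n + d)) :
    c.IsHomogeneous n := by
  by_cases hc : c = 0
  · subst hc; exact isHomogeneous_zero _ _ _
  have h1 : F * homogeneousComponent n c = F * c := by
    have hs := sum_homogeneousComponent c
    have h2 : homogeneousComponent (n+d) (F * c) = F * homogeneousComponent n c := by
      conv_lhs => rw [← hs, Finset.mul_sum, map_sum]
      have : ∀ i, homogeneousComponent (n+d) (F * homogeneousComponent i c) =
          if i = n then F * homogeneousComponent n c else 0 := by
        intro i
        have hh : (F * homogeneousComponent i c).IsHomogeneous (d + i) :=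
          hF.mul (homogeneousComponent_isHomogeneous i c)
        rw [homogeneousComponent_of_mem hh]
        split_ifs with h1 h2 h2
        · subst h2; rfl
        · omega
        · omega
        · rfl
      simp only [this]
      rw [Finset.sum_ite_eq']
      split_ifs with h3
      · rfl
      · rw [homogeneousComponent_eq_zero n c (by simpa using h3)]; simp
    rw [← h2, homogeneousComponent_eq_self h]
  have := mul_left_cancel₀ hF0 h1
  rw [← this]; exact homogeneousComponent_isHomogeneous n c


/-- A formal parametrisation of the curve `F = 0` at the point `Q`. -/
structure IsBranch {K : Type*} [Field K] (F : MvPolynomial (Fin 3) K) (Q : Fin 3 → K)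
    (Y : Fin 3 → PowerSeries K) : Prop where
  const : ∀ i, PowerSeries.constantCoeff (Y i) = Q i
  zero : aeval Y F = 0
  ne : Q ≠ 0
  param : ∃ l : MvPolynomial (Fin 3) K, l.IsHomogeneous 1 ∧ (aeval Y l).order = 1

lemma constCoeff_aeval {K : Type*} [Field K] {Q : Fin 3 → K}
    {Y : Fin 3 → PowerSeries K} (hc : ∀ i, PowerSeries.constantCoeff (Y i) = Q i)
    (h : MvPolynomial (Fin 3) K) :
    PowerSeries.constantCoeff (aeval Y h) = eval Q h := by
  have : (PowerSeries.constantCoeff (R := K)).comp (aeval Y : MvPolynomial (Fin 3) K →ₐ[K] _).toRingHom = eval Q := by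
    apply MvPolynomial.ringHom_ext
    · intro r; simp
    · intro i; simp [hc]
  rw [← this]; rfl

/-- separating linear form -/
lemma exists_sep {K : Type*} [Field K] (Q R : Fin 3 → K) (hQR : ∀ c : K, Q ≠ c • R) (hR : R ≠ 0) :
    ∃ l : MvPolynomial (Fin 3) K, l.IsHomogeneous 1 ∧ eval R l = 0 ∧ eval Q l ≠ 0 := by
  obtain ⟨k, hk⟩ := Function.ne_iff.mp hR
  have hk : R k ≠ 0 := hk
  have : ∃ j, R k * Q j - Q k * R j ≠ 0 := by
    by_contra! h
    apply hQR (Q k / R k)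
    ext j
    have := h j
    simp only [Pi.smul_apply, smul_eq_mul]
    field_simp
    linear_combination this
  obtain ⟨j, hj⟩ := this
  refine ⟨C (R k) * X j - C (R j) * X k, ?_, ?_, ?_⟩
  · exact (isHomogeneous_C_mul_X _ _).sub (isHomogeneous_C_mul_X _ _)
  · simp; ring
  · simp; intro h; apply hj; linear_combination h

lemma exists_nonvanish {K : Type*} [Field K] (Q : Fin 3 → K) (hQ : Q ≠ 0) :
    ∃ l : MvPolynomial (Fin 3) K, l.IsHomogeneous 1 ∧ eval Q l ≠ 0 := by
  obtain ⟨k, hk⟩ := Function.ne_iff.mp hQ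
  exact ⟨X k, isHomogeneous_X _ _, by simpa using hk⟩

lemma order_zero_of_const {K : Type*} [Field K] {f : PowerSeries K}
    (h : PowerSeries.constantCoeff f ≠ 0) : f.order = 0 := by
  have : f.order = ((0:ℕ) : ℕ∞) := by
    rw [PowerSeries.order_eq_nat]
    simpa using h
  simpa using this

lemma X_dvd_of_const {K : Type*} [Field K] {f : PowerSeries K}
    (h : PowerSeries.constantCoeff f = 0) : (PowerSeries.X : PowerSeries K) ∣ f :=
  PowerSeries.X_dvd_iff.mpr h

/-- interpolating forms -/
lemma exists_interp {K : Type*} [Field K] {F : MvPolynomial (Fin 3) K} {ι : Type*} [Fintype ι]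
    [DecidableEq ι]
    (Q : ι → Fin 3 → K) (Y : ι → Fin 3 → PowerSeries K) (hB : ∀ i, IsBranch F (Q i) (Y i))
    (hQ : ∀ i j, i ≠ j → ∀ c : K, Q i ≠ c • Q j) (e : ι → ℕ) (N : ℕ) (hN : 2 * ∑ i, e i ≤ N)
    (i : ι) (j : ℕ) (hj : j < e i) :
    ∃ g : MvPolynomial (Fin 3) K, g.IsHomogeneous N ∧ (aeval (Y i) g).order = (j : ℕ∞) ∧
      ∀ i', i' ≠ i → (PowerSeries.X : PowerSeries K) ^ (e i') ∣ aeval (Y i') g := by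
  obtain ⟨l, hl, hlo⟩ := (hB i).param
  obtain ⟨m, hm, hmo⟩ := exists_nonvanish (Q i) (hB i).ne
  have hsep : ∀ i' : ι, ∃ s : MvPolynomial (Fin 3) K, s.IsHomogeneous 1 ∧
      (i' ≠ i → eval (Q i') s = 0) ∧ eval (Q i) s ≠ 0 := by
    intro i'
    by_cases h : i' = i
    · exact ⟨m, hm, fun h' => absurd h h', hmo⟩
    · obtain ⟨s, h1, h2, h3⟩ := exists_sep (Q i) (Q i') (hQ i i' (Ne.symm h)) (hB i').ne
      exact ⟨s, h1, fun _ => h2, h3⟩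
  choose s hs1 hs2 hs3 using hsep
  have hei : e i ≤ ∑ i, e i := Finset.single_le_sum (f := e) (fun _ _ => Nat.zero_le _) (Finset.mem_univ i)
  have hprod : (∏ i', s i' ^ e i').IsHomogeneous (∑ i', e i') := by
    apply IsHomogeneous.prod
    intro i' _
    have := (hs1 i').pow (e i')
    simpa using this
  refine ⟨l ^ j * (∏ i', s i' ^ e i') * m ^ (N - j - ∑ i', e i'), ?_, ?_, ?_⟩
  · have h1 := ((hl.pow j).mul hprod).mul (hm.pow (N - j - ∑ i', e i'))
    convert h1 using 1
    omega
  · have h0 : ∀ p : MvPolynomial (Fin 3) K, eval (Q i) p ≠ 0 → (aeval (Y i) p).order = 0 := by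
      intro p hp
      apply order_zero_of_const
      rwa [constCoeff_aeval (hB i).const]
    rw [map_mul, map_mul, PowerSeries.order_mul, PowerSeries.order_mul, map_pow, PowerSeries.order_pow, hlo,
      h0 (∏ i', s i' ^ e i'), h0 (m ^ _)]
    · simp
    · simp [hmo]
    · rw [map_prod]
      rw [Finset.prod_ne_zero_iff]
      intro a _
      simp [hs3]
  · intro i' hi'
    have hx : (PowerSeries.X : PowerSeries K) ∣ aeval (Y i') (s i') := by
      apply X_dvd_of_const
      rw [constCoeff_aeval (hB i').const]
      exact hs2 i' hi'
    rw [map_mul, map_mul, map_prod]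
    apply Dvd.dvd.mul_right
    apply Dvd.dvd.mul_left
    refine dvd_trans ?_ (Finset.dvd_prod_of_mem _ (Finset.mem_univ i'))
    rw [map_pow]
    exact pow_dvd_pow_of_dvd hx _

/-- Bezout -/
lemma bezout {K : Type*} [Field K] {F : MvPolynomial (Fin 3) K} {d : ℕ} (hF : F.IsHomogeneous d)
    (hirr : Irreducible F) {ι : Type*} [Fintype ι]
    (Q : ι → Fin 3 → K) (Y : ι → Fin 3 → PowerSeries K) (hB : ∀ i, IsBranch F (Q i) (Y i))
    (hQ : ∀ i j, i ≠ j → ∀ c : K, Q i ≠ c • Q j) (e : ι → ℕ)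
    (n : ℕ) (h : MvPolynomial (Fin 3) K) (hh : h.IsHomogeneous n) (hFh : ¬ F ∣ h)
    (hv : ∀ i, (PowerSeries.X : PowerSeries K) ^ (e i) ∣ aeval (Y i) h) :
    ∑ i, e i ≤ d * n := by
  classical
  have hF0 : F ≠ 0 := hirr.ne_zero
  have hh0 : h ≠ 0 := fun h0 => hFh (h0 ▸ dvd_zero F)
  obtain ⟨r, hr⟩ : ∃ r, r = 2 * ∑ i, e i := ⟨_, rfl⟩
  set N := r + n + d with hN
  let V := fun n => homogeneousSubmodule (Fin 3) K n
  let U1 := (V (r + d)).map (LinearMap.mulLeft K h)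
  let U2 := (V (r + n)).map (LinearMap.mulLeft K F)
  let U12 := (V r).map (LinearMap.mulLeft K (F * h))
  have finj : ∀ (p : MvPolynomial (Fin 3) K) (_ : p ≠ 0) (n : ℕ),
      Module.finrank K ((V n).map (LinearMap.mulLeft K p)) = (n+2).choose 2 := by
    intro p hp n
    rw [← finrank_homog K n]
    refine LinearEquiv.finrank_eq (Submodule.equivMapOfInjective _ ?_ _).symm
    intro a b hab
    exact mul_left_cancel₀ hp hab
  have f1 : Module.finrank K U1 = (r + d + 2).choose 2 := finj h hh0 _
  have f2 : Module.finrank K U2 = (r + n + 2).choose 2 := finj F hF0 _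
  have f12 : Module.finrank K U12 = (r + 2).choose 2 := finj _ (mul_ne_zero hF0 hh0) _
  have hle : U1 ⊓ U2 ≤ U12 := by
    rintro x ⟨⟨a, ha, rfl⟩, ⟨b, hb, hab⟩⟩
    simp only [LinearMap.mulLeft_apply] at hab ⊢
    have hdv : F ∣ h * a := ⟨b, hab.symm⟩
    rcases hirr.prime.dvd_or_dvd hdv with h1 | ⟨c, rfl⟩
    · exact absurd h1 hFh
    · refine ⟨c, ?_, ?_⟩
      · exact homog_factor hF hF0 ha
      · simp only [LinearMap.mulLeft_apply]; ring
  have fd1 : FiniteDimensional K U1 := inferInstance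
  have fd2 : FiniteDimensional K U2 := inferInstance
  have fd12 : FiniteDimensional K U12 := inferInstance
  have hinf : Module.finrank K (U1 ⊓ U2 : Submodule K _) ≤ (r+2).choose 2 := by
    rw [← f12]; exact Submodule.finrank_mono hle
  have hsup := Submodule.finrank_sup_add_finrank_inf_eq U1 U2
  rw [f1, f2] at hsup
  -- interpolation
  have hinterp := fun (x : Σ i, Fin (e i)) =>
    exists_interp Q Y hB hQ e N (by omega) x.1 x.2 x.2.2
  choose g hg1 hg2 hg3 using hinterp
  have hker : ∀ x ∈ U1 ⊔ U2, ∀ i, (PowerSeries.X : PowerSeries K) ^ (e i) ∣ aeval (Y i) x := by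
    intro x hx i
    obtain ⟨y, ⟨a, _, rfl⟩, z, ⟨b, _, rfl⟩, rfl⟩ := Submodule.mem_sup.mp hx
    simp only [LinearMap.mulLeft_apply, map_add, map_mul, (hB i).zero, zero_mul, add_zero]
    exact (hv i).mul_right _
  have key : ∀ c : (Σ i, Fin (e i)) → K, (∑ x, c x • g x) ∈ U1 ⊔ U2 → ∀ x, c x = 0 := by
    intro c hc
    rintro ⟨i, j⟩
    have h1 := hker _ hc i
    rw [map_sum, Fintype.sum_sigma, ← Finset.add_sum_erase _ _ (Finset.mem_univ i)] at h1
    have h2 : (PowerSeries.X : PowerSeries K) ^ (e i) ∣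
        ∑ x ∈ Finset.univ.erase i, ∑ y, aeval (Y i) (c ⟨x, y⟩ • g ⟨x, y⟩) := by
      apply Finset.dvd_sum
      intro x hx
      apply Finset.dvd_sum
      intro y _
      rw [map_smul, PowerSeries.smul_eq_C_mul]
      apply Dvd.dvd.mul_left
      exact hg3 ⟨x, y⟩ i (Finset.ne_of_mem_erase hx).symm
    have h3 := (dvd_add_left h2).mp h1
    simp only [map_smul] at h3
    exact distinct_orders Finset.univ (fun j : Fin (e i) => (j : ℕ))
      (fun a _ b _ hab => Fin.ext hab) (fun y => aeval (Y i) (g ⟨i, y⟩))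
      (fun y _ => hg2 ⟨i, y⟩) (fun y => c ⟨i, y⟩) (e i) h3 j (Finset.mem_univ _) j.2
  have hli : LinearIndependent K g := by
    rw [Fintype.linearIndependent_iff]
    intro c hc
    exact key c (by rw [hc]; exact Submodule.zero_mem _)
  let U3 := Submodule.span K (Set.range g)
  have f3 : Module.finrank K U3 = ∑ i, e i := by
    rw [finrank_span_eq_card hli]; simp
  have fd3 : FiniteDimensional K U3 := FiniteDimensional.span_of_finite K (Set.finite_range g)
  have hdis : (U1 ⊔ U2) ⊓ U3 = ⊥ := by
    rw [eq_bot_iff]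
    rintro x ⟨hx1, hx2⟩
    obtain ⟨c, rfl⟩ := (Submodule.mem_span_range_iff_exists_fun K).mp hx2
    have := key c hx1
    simp [this]
  have hsup2 := Submodule.finrank_sup_add_finrank_inf_eq (U1 ⊔ U2) U3
  rw [hdis, finrank_bot, f3] at hsup2
  have hleV : (U1 ⊔ U2) ⊔ U3 ≤ V N := by
    refine sup_le (sup_le ?_ ?_) ?_
    · rintro _ ⟨a, ha, rfl⟩
      have := hh.mul (show a.IsHomogeneous (r+d) from ha)
      show (h * a).IsHomogeneous N
      convert this using 1; omega
    · rintro _ ⟨a, ha, rfl⟩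
      have := hF.mul (show a.IsHomogeneous (r+n) from ha)
      show (F * a).IsHomogeneous N
      convert this using 1; omega
    · rw [Submodule.span_le]
      rintro _ ⟨x, rfl⟩
      exact hg1 x
  have := Submodule.finrank_mono hleV
  have hVN := finrank_homog K N
  rw [hVN] at this
  have c1 := two_mul_choose_two N
  have c2 := two_mul_choose_two (r+d)
  have c3 := two_mul_choose_two (r+n)
  have c4 := two_mul_choose_two r
  rw [hN] at c1 this
  nlinarith



lemma bezout_single {K : Type*} [Field K] {F : MvPolynomial (Fin 3) K} {d : ℕ} (hF : F.IsHomogeneous d)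
    (hirr : Irreducible F) {Q : Fin 3 → K} {Y : Fin 3 → PowerSeries K} (hB : IsBranch F Q Y)
    (n : ℕ) (h : MvPolynomial (Fin 3) K) (hh : h.IsHomogeneous n) (e : ℕ) (he : d * n < e)
    (hv : (PowerSeries.X : PowerSeries K) ^ e ∣ aeval Y h) : F ∣ h := by
  by_contra hcon
  have := bezout hF hirr (ι := Unit) (fun _ => Q) (fun _ => Y) (fun _ => hB)
    (fun i j hij => absurd rfl hij) (fun _ => e) n h hh hcon (fun _ => hv)
  simp at this
  omega

lemma order_set {K : Type*} [Field K] {F : MvPolynomial (Fin 3) K} {d : ℕ} (hF : F.IsHomogeneous d)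
    (hirr : Irreducible F) {Q : Fin 3 → K} {Y : Fin 3 → PowerSeries K} (hB : IsBranch F Q Y)
    (n : ℕ) :
    ∃ (I : Finset ℕ) (a : ℕ → MvPolynomial (Fin 3) K),
      (n + d + 2).choose 2 ≤ I.card + (n + 2).choose 2 ∧
      ∀ i ∈ I, (a i).IsHomogeneous (n + d) ∧ (aeval Y (a i)).order = (i : ℕ∞) ∧ i ≤ d * (n + d) := by
  classical
  let I : Finset ℕ := (Finset.range (d * (n + d) + 1)).filter
    (fun i : ℕ => ∃ a : MvPolynomial (Fin 3) K, a.IsHomogeneous (n + d) ∧ (aeval Y a).order = (i : ℕ∞))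
  have hI : ∀ i ∈ I, ∃ a : MvPolynomial (Fin 3) K, a.IsHomogeneous (n + d) ∧ (aeval Y a).order = (i : ℕ∞) := by
    intro i hi
    exact (Finset.mem_filter.mp hi).2
  choose! a ha1 ha2 using hI
  refine ⟨I, a, ?_, fun i hi => ⟨ha1 i hi, ha2 i hi, ?_⟩⟩
  · let V := fun n => homogeneousSubmodule (Fin 3) K n
    let Φ : (V (n + d)) →ₗ[K] (I → K) :=
      LinearMap.pi (fun i => (PowerSeries.coeff (R := K) i.1) ∘ₗ (aeval Y).toLinearMap ∘ₗ (V (n+d)).subtype)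
    let W := (V n).map (LinearMap.mulLeft K F)
    have hW : Module.finrank K W = (n+2).choose 2 := by
      rw [← finrank_homog K n]
      refine LinearEquiv.finrank_eq (Submodule.equivMapOfInjective _ ?_ _).symm
      intro a b hab
      exact mul_left_cancel₀ hirr.ne_zero hab
    have hker : (LinearMap.ker Φ).map (V (n+d)).subtype ≤ W := by
      rintro _ ⟨⟨x, hx⟩, hx2, rfl⟩
      have hx3 : Φ ⟨x, hx⟩ = 0 := hx2
      show x ∈ W
      have hdv : F ∣ x := by
        by_contra hcon
        have hY : aeval Y x ≠ 0 := by
          intro h0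
          exact hcon (bezout_single hF hirr hB (n+d) x hx (d * (n+d) + 1) (by omega) (by rw [h0]; exact dvd_zero _))
        have ho := PowerSeries.coe_toNat_order hY
        have hle : (aeval Y x).order.toNat ≤ d * (n+d) := by
          by_contra hlt
          exact hcon (bezout_single hF hirr hB (n+d) x hx _ (by omega) (PowerSeries.X_pow_order_dvd (φ := aeval Y x)))
        have hmem : (aeval Y x).order.toNat ∈ I := by
          refine Finset.mem_filter.mpr ⟨Finset.mem_range.mpr (by omega), x, hx, ho.symm⟩
        have h1 := congrFun hx3 ⟨_, hmem⟩
        exact PowerSeries.coeff_order hY h1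
      obtain ⟨c, rfl⟩ := hdv
      exact ⟨c, homog_factor hF hirr.ne_zero hx, rfl⟩
    have h1 := LinearMap.finrank_range_add_finrank_ker Φ
    rw [finrank_homog] at h1
    have h2 : Module.finrank K (LinearMap.range Φ) ≤ I.card := by
      have := Submodule.finrank_le (LinearMap.range Φ)
      simpa using this
    have h3 : Module.finrank K (LinearMap.ker Φ) ≤ (n+2).choose 2 := by
      rw [← hW, ← Submodule.finrank_map_subtype_eq]
      exact Submodule.finrank_mono hker
    omega
  · have := Finset.mem_range.mp (Finset.mem_filter.mp hi).1
    omega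

open Polynomial in
/-- Hensel lifting for a not necessarily monic polynomial. -/
lemma hensel_nonmonic {R : Type*} [CommRing R] (I : Ideal R)
    [IsAdicComplete I R] (f : Polynomial R) (a₀ : R) (h₁ : f.eval a₀ ∈ I)
    (h₂ : IsUnit (Ideal.Quotient.mk I (f.derivative.eval a₀))) :
    ∃ a : R, f.IsRoot a ∧ a - a₀ ∈ I := by
  classical
    let f' := derivative f
    let c : ℕ → R := fun n => Nat.recOn n a₀ fun _ b => b - f.eval b * Ring.inverse (f'.eval b)
    have hc : ∀ n, c (n + 1) = c n - f.eval (c n) * Ring.inverse (f'.eval (c n)) := by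
      intro n
      simp only [c]
    have hc_mod : ∀ n, c n ≡ a₀ [SMOD I] := by
      intro n
      induction n with
      | zero => rfl
      | succ n ih => ?_
      rw [hc, sub_eq_add_neg, ← add_zero a₀]
      refine ih.add ?_
      rw [SModEq.zero, Ideal.neg_mem_iff]
      refine I.mul_mem_right _ ?_
      rw [← SModEq.zero] at h₁ ⊢
      exact (ih.eval f).trans h₁
    have hf'c : ∀ n, IsUnit (f'.eval (c n)) := by
      intro n
      have := isLocalHom_of_le_jacobson_bot I (IsAdicComplete.le_jacobson_bot I)
      apply IsUnit.of_map (Ideal.Quotient.mk I)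
      convert! h₂ using 1
      exact SModEq.def.mp ((hc_mod n).eval _)
    have hfcI : ∀ n, f.eval (c n) ∈ I ^ (n + 1) := by
      intro n
      induction n with
      | zero => simpa only [Nat.rec_zero, zero_add, pow_one] using! h₁
      | succ n ih => ?_
      rw [← taylor_eval_sub (c n), hc, sub_eq_add_neg, sub_eq_add_neg,
        add_neg_cancel_comm]
      rw [Polynomial.eval_eq_sum, Polynomial.sum_over_range' _ _ _ (lt_add_of_pos_right _ zero_lt_two), ←
        Finset.sum_range_add_sum_Ico _ (Nat.le_add_left _ _)]
      swap
      · intro i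
        rw [zero_mul]
      refine Ideal.add_mem _ ?_ ?_
      · rw [← one_add_one_eq_two, Finset.sum_range_succ, Finset.range_one, Finset.sum_singleton,
          taylor_coeff_zero, taylor_coeff_one, pow_zero, pow_one, mul_one, mul_neg,
          mul_left_comm, Ring.mul_inverse_cancel _ (hf'c n), mul_one, add_neg_cancel]
        exact Ideal.zero_mem _
      · refine Submodule.sum_mem _ ?_
        simp only [Finset.mem_Ico]
        rintro i ⟨h2i, _⟩
        have aux : n + 2 ≤ i * (n + 1) := by trans 2 * (n + 1) <;> nlinarith only [h2i]
        refine Ideal.mul_mem_left _ _ (Ideal.pow_le_pow_right aux ?_)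
        rw [pow_mul']
        exact Ideal.pow_mem_pow ((Ideal.neg_mem_iff _).2 <| Ideal.mul_mem_right _ _ ih) _
    have aux : ∀ m n, m ≤ n → c m ≡ c n [SMOD (I ^ m • ⊤ : Ideal R)] := by
      intro m n hmn
      rw [← Ideal.one_eq_top, Ideal.smul_eq_mul, mul_one]
      obtain ⟨k, rfl⟩ := Nat.exists_eq_add_of_le hmn
      clear hmn
      induction k with
      | zero => rw [add_zero]
      | succ k ih => ?_
      rw [← add_assoc, hc, ← add_zero (c m), sub_eq_add_neg]
      refine ih.add ?_
      symm
      rw [SModEq.zero, Ideal.neg_mem_iff]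
      refine Ideal.mul_mem_right _ _ (Ideal.pow_le_pow_right ?_ (hfcI _))
      rw [add_assoc]
      exact le_self_add
    obtain ⟨a, ha⟩ := IsPrecomplete.prec' c (aux _ _)
    refine ⟨a, ?_, ?_⟩
    · show f.IsRoot a
      suffices ∀ n, f.eval a ≡ 0 [SMOD (I ^ n • ⊤ : Ideal R)] by exact IsHausdorff.haus' _ this
      intro n
      specialize ha n
      rw [← Ideal.one_eq_top, Ideal.smul_eq_mul, mul_one] at ha ⊢
      refine (ha.symm.eval f).trans ?_
      rw [SModEq.zero]
      exact Ideal.pow_le_pow_right le_self_add (hfcI _)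
    · show a - a₀ ∈ I
      specialize ha (0 + 1)
      rw [hc, pow_one, ← Ideal.one_eq_top, Ideal.smul_eq_mul, mul_one, sub_eq_add_neg] at ha
      rw [← SModEq.sub_mem, ← add_zero a₀]
      refine ha.symm.trans (SModEq.rfl.add ?_)
      rw [SModEq.zero, Ideal.neg_mem_iff]
      exact Ideal.mul_mem_right _ _ h₁

lemma exists_branch {K : Type*} [Field K] {F : MvPolynomial (Fin 3) K}
    {Q : Fin 3 → K} (hQ : eval Q F = 0) (i j k : Fin 3) (hij : i ≠ j) (hik : i ≠ k) (hjk : j ≠ k)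
    (hi : eval Q (pderiv i F) ≠ 0) (hk : Q k ≠ 0) :
    ∃ Y : Fin 3 → PowerSeries K, IsBranch F Q Y ∧ Y k = PowerSeries.C (Q k) ∧
      Y j = PowerSeries.C (Q j) + PowerSeries.X := by
  classical
  let Z : PowerSeries K → Fin 3 → PowerSeries K := fun s =>
    Function.update (Function.update (fun l => PowerSeries.C (Q l)) j (PowerSeries.C (Q j) + PowerSeries.X)) i s
  let ZP : Fin 3 → Polynomial (PowerSeries K) :=
    Function.update (fun l => Polynomial.C (Z 0 l)) i Polynomial.X
  let G : Polynomial (PowerSeries K) := aeval ZP F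
  have hev : ∀ s, ∀ H : MvPolynomial (Fin 3) K, Polynomial.eval s (aeval ZP H) = aeval (Z s) H := by
    intro s H
    have : (Polynomial.evalRingHom s).comp (aeval ZP : MvPolynomial (Fin 3) K →ₐ[K] _).toRingHom
        = (aeval (Z s) : MvPolynomial (Fin 3) K →ₐ[K] _).toRingHom := by
      apply MvPolynomial.ringHom_ext
      · intro r; simp [Polynomial.algebraMap_apply]
      · intro l
        by_cases hl : l = i
        · subst hl; simp [ZP, Z]
        · simp [ZP, Z, hl]
    exact congrArg (fun f => f H) this
  have hder : Polynomial.derivative G = aeval ZP (pderiv i F) := by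
    have : ∀ H : MvPolynomial (Fin 3) K, Polynomial.derivative (aeval ZP H) = aeval ZP (pderiv i H) := by
      intro H
      induction H using MvPolynomial.induction_on with
      | C r => simp [Polynomial.algebraMap_apply]
      | add p q hp hq => simp [hp, hq]
      | mul_X p l hp =>
        by_cases hl : l = i
        · subst hl
          simp [hp, ZP]; ring
        · simp [hp, ZP, hl]; ring
    exact this F
  have hZc : ∀ s, PowerSeries.constantCoeff s = Q i → ∀ l, PowerSeries.constantCoeff (Z s l) = Q l := by
    intro s hs l
    by_cases hl : l = i
    · subst hl; simp [Z, hs]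
    · by_cases hl2 : l = j
      · subst hl2; simp [Z, hl]
      · simp [Z, hl, hl2]
  have hens : ∃ s : PowerSeries K, G.IsRoot s ∧ s - PowerSeries.C (Q i) ∈ Ideal.span {(PowerSeries.X : PowerSeries K)} := by
    apply hensel_nonmonic
    · rw [Ideal.mem_span_singleton, PowerSeries.X_dvd_iff, hev, constCoeff_aeval (hZc _ (by simp)), hQ]
    · apply IsUnit.map
      rw [hder, hev, PowerSeries.isUnit_iff_constantCoeff, constCoeff_aeval (hZc _ (by simp))]
      exact hi.isUnit
  obtain ⟨s, hs1, hs2⟩ := hens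
  have hsc : PowerSeries.constantCoeff s = Q i := by
    rw [Ideal.mem_span_singleton, PowerSeries.X_dvd_iff] at hs2
    simpa [sub_eq_zero] using hs2
  refine ⟨Z s, ⟨hZc s hsc, ?_, ?_, ?_⟩, ?_, ?_⟩
  · rw [← hev]; exact hs1
  · intro h; apply hk; rw [h]; rfl
  · refine ⟨C (Q k) * X j - C (Q j) * X k, (isHomogeneous_C_mul_X _ _).sub (isHomogeneous_C_mul_X _ _), ?_⟩
    have : aeval (Z s) (C (Q k) * X j - C (Q j) * X k) = PowerSeries.C (Q k) * PowerSeries.X := by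
      simp [Z, hij.symm, hik.symm, hjk.symm]
      ring
    rw [this, PowerSeries.order_mul, PowerSeries.order_X, order_zero_of_const (by simpa using hk), zero_add]
  · simp [Z, hik.symm, hjk.symm]
  · simp [Z, hij.symm]


/-- The derivation along the curve `F = 0`. -/
noncomputable def tanDer {K : Type*} [Field K] (F : MvPolynomial (Fin 3) K) :
    Derivation K (MvPolynomial (Fin 3) K) (MvPolynomial (Fin 3) K) :=
  (pderiv 1 F) • pderiv 0 - (pderiv 0 F) • pderiv 1

lemma tanDer_apply {K : Type*} [Field K] (F h : MvPolynomial (Fin 3) K) :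
    tanDer F h = pderiv 1 F * pderiv 0 h - pderiv 0 F * pderiv 1 h := by
  simp [tanDer]

lemma tanDer_homog {K : Type*} [Field K] {F h : MvPolynomial (Fin 3) K} {d n : ℕ}
    (hF : F.IsHomogeneous d) (hh : h.IsHomogeneous n) (hd : 2 ≤ d) (hn : 1 ≤ n) :
    (tanDer F h).IsHomogeneous (n + (d - 2)) := by
  rw [tanDer_apply]
  have h1 : n + (d - 2) = (d - 1) + (n - 1) := by omega
  rw [h1]
  exact (hF.pderiv.mul hh.pderiv).sub (hF.pderiv.mul hh.pderiv)

lemma tanDer_pow_homog {K : Type*} [Field K] {F h : MvPolynomial (Fin 3) K} {d n : ℕ}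
    (hF : F.IsHomogeneous d) (hh : h.IsHomogeneous n) (hd : 2 ≤ d) (hn : 1 ≤ n) (k : ℕ) :
    (((tanDer F : MvPolynomial (Fin 3) K →ₗ[K] MvPolynomial (Fin 3) K) ^ k) h).IsHomogeneous
      (n + k * (d - 2)) := by
  induction k with
  | zero => simpa using hh
  | succ k ih =>
    rw [pow_succ', Module.End.mul_apply]
    have := tanDer_homog hF ih hd (by omega)
    have e : n + (k + 1) * (d - 2) = n + k * (d - 2) + (d - 2) := by ring
    rw [e]
    exact this

lemma chain_rule {K : Type*} [Field K] (Y : Fin 3 → PowerSeries K) (h : MvPolynomial (Fin 3) K) :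
    PowerSeries.derivative K (aeval Y h) =
      ∑ i, aeval Y (pderiv i h) * PowerSeries.derivative K (Y i) := by
  induction h using MvPolynomial.induction_on with
  | C r => simp
  | add p q hp hq => simp [hp, hq, add_mul, Finset.sum_add_distrib]
  | mul_X p l hp =>
    rw [map_mul, Derivation.leibniz, hp]
    simp only [aeval_X, smul_eq_mul, Derivation.leibniz, map_add, map_mul, add_mul,
      Finset.sum_add_distrib, pderiv_X, Finset.mul_sum]
    congr 1
    · rw [Finset.sum_eq_single l]
      · simp
      · intro b _ hb
        simp [Pi.single_apply, hb.symm]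
      · simp
    · exact Finset.sum_congr rfl (fun i _ => by ring)

lemma affine_branch {K : Type*} [Field K] {F : MvPolynomial (Fin 3) K} {d : ℕ}
    (hF : F.IsHomogeneous d) {Q : Fin 3 → K} (hQ : eval Q F = 0)
    (hs : ∃ i : Fin 3, eval Q (pderiv i F) ≠ 0) (hQ2 : Q 2 = 1) :
    ∃ Y : Fin 3 → PowerSeries K, IsBranch F Q Y ∧
      ∃ u : PowerSeries K, IsUnit u ∧ ∀ h, aeval Y (tanDer F h) =
        u * PowerSeries.derivative K (aeval Y h) := by
  have heul : eval Q (pderiv 0 F) * Q 0 + eval Q (pderiv 1 F) * Q 1 + eval Q (pderiv 2 F) = 0 := by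
    have := congrArg (eval Q) hF.sum_X_mul_pderiv
    simp [Fin.sum_univ_three, hQ, hQ2] at this
    linear_combination this
  have h01 : eval Q (pderiv 1 F) ≠ 0 ∨ eval Q (pderiv 0 F) ≠ 0 := by
    by_contra! hcon
    obtain ⟨i, hi⟩ := hs
    apply hi
    rw [hcon.1, hcon.2] at heul
    fin_cases i
    · exact hcon.2
    · exact hcon.1
    · simpa using heul
  have hQ2' : Q 2 ≠ 0 := by rw [hQ2]; exact one_ne_zero
  rcases h01 with h1 | h0
  · obtain ⟨Y, hB, hY2, hY0⟩ := exists_branch hQ 1 0 2 (by decide) (by decide) (by decide) h1 hQ2'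
    refine ⟨Y, hB, aeval Y (pderiv 1 F), ?_, ?_⟩
    · rw [PowerSeries.isUnit_iff_constantCoeff, constCoeff_aeval hB.const]; exact h1.isUnit
    · intro h
      have e1 := chain_rule Y F
      rw [hB.zero] at e1
      have e2 := chain_rule Y h
      simp [Fin.sum_univ_three, hY2, hY0] at e1 e2
      rw [e2, tanDer_apply]
      simp only [map_sub, map_mul]
      linear_combination aeval Y (pderiv 1 h) * e1
  · obtain ⟨Y, hB, hY2, hY1⟩ := exists_branch hQ 0 1 2 (by decide) (by decide) (by decide) h0 hQ2'
    refine ⟨Y, hB, - aeval Y (pderiv 0 F), ?_, ?_⟩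
    · rw [IsUnit.neg_iff, PowerSeries.isUnit_iff_constantCoeff, constCoeff_aeval hB.const]; exact h0.isUnit
    · intro h
      have e1 := chain_rule Y F
      rw [hB.zero] at e1
      have e2 := chain_rule Y h
      simp [Fin.sum_univ_three, hY2, hY1] at e1 e2
      rw [e2, tanDer_apply]
      simp only [map_sub, map_mul]
      linear_combination - aeval Y (pderiv 0 h) * e1

lemma vanish_of_der {K : Type*} [Field K] {F : MvPolynomial (Fin 3) K} {Q : Fin 3 → K}
    {Y : Fin 3 → PowerSeries K} (hB : IsBranch F Q Y) (u : PowerSeries K) (hu : IsUnit u)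
    (hder : ∀ h, aeval Y (tanDer F h) = u * PowerSeries.derivative K (aeval Y h))
    (M : ℕ) (hM : ∀ n, 0 < n → n < M → (n : K) ≠ 0) (h : MvPolynomial (Fin 3) K)
    (hv : ∀ k < M, eval Q (((tanDer F : MvPolynomial (Fin 3) K →ₗ[K] MvPolynomial (Fin 3) K) ^ k) h) = 0) :
    (PowerSeries.X : PowerSeries K) ^ M ∣ aeval Y h := by
  induction M generalizing h with
  | zero => simp
  | succ M ih =>
    have h1 := ih (fun n h0 hn => hM n h0 (by omega)) (tanDer F h) (fun k hk => by
      have := hv (k+1) (by omega)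
      rw [pow_succ, Module.End.mul_apply] at this
      exact this)
    rw [hder, hu.dvd_mul_left] at h1
    rw [PowerSeries.X_pow_dvd_iff] at h1 ⊢
    intro m hm
    rcases m with _ | m
    · have := hv 0 (by omega)
      rw [pow_zero, Module.End.one_apply, ← constCoeff_aeval hB.const] at this
      simpa using this
    · have := h1 m (by omega)
      rw [PowerSeries.coeff_derivative] at this
      have h2 := hM (m+1) (by omega) (by omega)
      push_cast at h2
      exact (mul_eq_zero.mp this).resolve_right h2


lemma frob_surj {K : Type*} [Field K] [Fintype K] (p μ : ℕ) [Fact p.Prime] [CharP K p] (x : K) :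
    ∃ y : K, y ^ (p ^ μ) = x := by
  have hinj : Function.Injective (iterateFrobenius K p μ) := (iterateFrobenius K p μ).injective
  obtain ⟨y, hy⟩ := (Finite.injective_iff_surjective.mp hinj) x
  exact ⟨y, by simpa [iterateFrobenius_def] using hy⟩

lemma stepanov {K : Type*} [Field K] [Fintype K] [DecidableEq K] (p μ : ℕ) [Fact p.Prime] [CharP K p]
    {F : MvPolynomial (Fin 3) K} {d : ℕ}
    (hF : F.IsHomogeneous d) (hirr : Irreducible F) (hd : 2 ≤ d)
    (S : Finset (Fin 3 → K)) (hS : ∀ Q ∈ S, eval Q F = 0 ∧ (∃ i : Fin 3, eval Q (pderiv i F) ≠ 0) ∧ Q 2 = 1)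
    (P : Fin 3 → K) (hP : P ∈ S) (M0 l m e nI nJ : ℕ) (hM0 : M0 ≤ p)
    (hM : M0 * p ^ μ ≤ Fintype.card K)
    (hl : d * (l + d) * p ^ μ < Fintype.card K)
    (hI : nI + (l + 2).choose 2 ≤ (l + d + 2).choose 2)
    (hJ : nJ + e + (m + 2).choose 2 ≤ (m + d + 2).choose 2)
    (hcount : ∑ k ∈ Finset.range M0, (d * ((l + d + k * (d - 2)) * p ^ μ + (m + d)) + 1) < nI * nJ) :
    (S.card - 1) * (M0 * p ^ μ) + Fintype.card K * e ≤
      d * ((l + d) * p ^ μ + (m + d) * Fintype.card K) := by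
  classical
  set q := Fintype.card K with hq
  set π := p ^ μ with hπ
  have hp : p.Prime := Fact.out
  have hπ0 : 0 < π := pow_pos hp.pos _
  obtain ⟨r, -, hr⟩ := FiniteField.card K p
  rw [← hq] at hr
  have hq0 : 0 < q := Fintype.card_pos
  have : CharP (PowerSeries K) p :=
    charP_of_injective_algebraMap (algebraMap K (PowerSeries K)).injective p
  have : ExpChar (PowerSeries K) p := ExpChar.prime hp
  have hbr : ∀ Q : S, ∃ Y : Fin 3 → PowerSeries K, IsBranch F Q.1 Y ∧
      ∃ u : PowerSeries K, IsUnit u ∧ ∀ h, aeval Y (tanDer F h) =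
        u * PowerSeries.derivative K (aeval Y h) := fun Q =>
    affine_branch hF (hS _ Q.2).1 (hS _ Q.2).2.1 (hS _ Q.2).2.2
  choose Y hB u hu hder using hbr
  set P' : S := ⟨P, hP⟩ with hP'
  obtain ⟨I, a, hIc, ha⟩ := order_set hF hirr (hB P') l
  obtain ⟨J, b, hJc, hb⟩ := order_set hF hirr (hB P') m
  set J' := J.filter (fun j => e ≤ j) with hJ'
  have hJ'c : J.card ≤ J'.card + e := by
    have h1 : J'.card + (J.filter (fun j => ¬ e ≤ j)).card = J.card :=
      Finset.card_filter_add_card_filter_not (s := J) (fun j => e ≤ j)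
    have h2 : (J.filter (fun j => ¬ e ≤ j)).card ≤ (Finset.range e).card := by
      apply Finset.card_le_card
      intro j hj
      simp at hj ⊢
      exact hj.2
    rw [Finset.card_range] at h2
    omega
  let D : MvPolynomial (Fin 3) K →ₗ[K] MvPolynomial (Fin 3) K := tanDer F
  let nn : ℕ → ℕ := fun k => (l + d + k * (d - 2)) * π + (m + d)
  let ι := ↥(I ×ˢ J')
  have hxI : ∀ x : ι, x.1.1 ∈ I := fun x => (Finset.mem_product.mp x.2).1
  have hxJ : ∀ x : ι, x.1.2 ∈ J := fun x => (Finset.mem_filter.mp (Finset.mem_product.mp x.2).2).1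
  have hxe : ∀ x : ι, e ≤ x.1.2 := fun x => (Finset.mem_filter.mp (Finset.mem_product.mp x.2).2).2
  let c : ℕ → (ι → K) →ₗ[K] MvPolynomial (Fin 3) K := fun k =>
    Fintype.linearCombination K (fun x : ι => ((D ^ k) (a x.1.1)) ^ π * b x.1.2)
  have hc : ∀ k β, c k β = ∑ x, β x • (((D ^ k) (a x.1.1)) ^ π * b x.1.2) := fun k β => by
    simp only [c, Fintype.linearCombination_apply]
  let Φ : (ι → K) →ₗ[K] ((Σ k : Fin M0, Fin (d * nn k + 1)) → K) :=
    LinearMap.pi (fun s => (PowerSeries.coeff (R := K) s.2.1) ∘ₗ (aeval (Y P')).toLinearMap ∘ₗ c s.1.1)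
  have hlt : Module.finrank K ((Σ k : Fin M0, Fin (d * nn k + 1)) → K) < Module.finrank K (ι → K) := by
    rw [Module.finrank_fintype_fun_eq_card, Module.finrank_fintype_fun_eq_card, Fintype.card_sigma,
      Fintype.card_coe, Finset.card_product]
    simp only [Fintype.card_fin]
    rw [Fin.sum_univ_eq_sum_range (fun k => d * nn k + 1)]
    refine lt_of_lt_of_le hcount ?_
    exact Nat.mul_le_mul (by omega) (by omega)
  have hkb := LinearMap.ker_ne_bot_of_finrank_lt (f := Φ) hlt
  obtain ⟨β, hβ, hβ0⟩ := (Submodule.ne_bot_iff _).mp hkb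
  have hΦ : Φ β = 0 := hβ
  -- the auxiliary forms vanish on the curve
  have hFc : ∀ k < M0, F ∣ c k β := by
    intro k hk
    refine bezout_single hF hirr (hB P') (nn k) _ ?_ (d * nn k + 1) (by omega) ?_
    · rw [hc]
      refine IsHomogeneous.sum _ _ _ (fun x _ => ?_)
      rw [smul_eq_C_mul]
      refine IsHomogeneous.C_mul ?_ _
      refine IsHomogeneous.mul ?_ (hb _ (hxJ x)).1
      exact (tanDer_pow_homog hF (ha _ (hxI x)).1 hd (by omega) k).pow π
    · rw [PowerSeries.X_pow_dvd_iff]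
      intro t ht
      exact congrFun hΦ ⟨⟨k, hk⟩, ⟨t, ht⟩⟩
  let h : MvPolynomial (Fin 3) K := ∑ x : ι, β x • (a x.1.1 ^ π * b x.1.2 ^ q)
  have hh : h.IsHomogeneous ((l + d) * π + (m + d) * q) := by
    refine IsHomogeneous.sum _ _ _ (fun x _ => ?_)
    rw [smul_eq_C_mul]
    refine IsHomogeneous.C_mul ?_ _
    exact ((ha _ (hxI x)).1.pow π).mul ((hb _ (hxJ x)).1.pow q)
  have hYh : ∀ Q : S, aeval (Y Q) h = ∑ x : ι, β x • (aeval (Y Q) (a x.1.1) ^ π * aeval (Y Q) (b x.1.2) ^ q) := by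
    intro Q
    simp [h]
  have hFh : ¬ F ∣ h := by
    rintro ⟨w, hw⟩
    apply hβ0
    have h0 : aeval (Y P') h = 0 := by rw [hw, map_mul, (hB P').zero, zero_mul]
    rw [hYh] at h0
    funext x
    have hsm : ∀ x : ι, x.1.1 * π < q := fun x =>
      lt_of_le_of_lt (Nat.mul_le_mul_right _ (ha _ (hxI x)).2.2) hl
    refine distinct_orders Finset.univ (fun x : ι => x.1.1 * π + x.1.2 * q) ?_ _ ?_ β
      (x.1.1 * π + x.1.2 * q + 1) (by rw [h0]; exact dvd_zero _) x (Finset.mem_univ _) (by simp)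
    · intro x _ y _ hxy
      have hxy : x.1.1 * π + x.1.2 * q = y.1.1 * π + y.1.2 * q := hxy
      have h1 := congrArg (· % q) hxy
      simp only [Nat.add_mul_mod_self_right, Nat.mod_eq_of_lt (hsm _)] at h1
      have h2 : x.1.1 = y.1.1 := Nat.eq_of_mul_eq_mul_right hπ0 h1
      have h3 : x.1.2 = y.1.2 := Nat.eq_of_mul_eq_mul_right hq0 (by rw [h1] at hxy; omega)
      exact Subtype.ext (Prod.ext h2 h3)
    · intro x _
      rw [PowerSeries.order_mul, PowerSeries.order_pow, PowerSeries.order_pow, (ha _ (hxI x)).2.1,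
        (hb _ (hxJ x)).2.1]
      simp [mul_comm]
  have hvP : (PowerSeries.X : PowerSeries K) ^ (q * e) ∣ aeval (Y P') h := by
    rw [hYh]
    refine Finset.dvd_sum (fun x _ => ?_)
    refine dvd_smul_of_dvd _ (dvd_mul_of_dvd_right ?_ _)
    rw [mul_comm, pow_mul]
    refine pow_dvd_pow_of_dvd ?_ q
    refine (pow_dvd_pow _ (hxe x)).trans ?_
    rw [PowerSeries.X_pow_dvd_iff]
    intro t ht
    apply PowerSeries.coeff_of_lt_order
    rw [(hb _ (hxJ x)).2.1]
    exact_mod_cast ht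
  have hvQ : ∀ Q : S, (PowerSeries.X : PowerSeries K) ^ (M0 * π) ∣ aeval (Y Q) h := by
    intro Q
    have : ∀ x : ι, ∃ γ : K, γ ^ π = β x * eval Q.1 (b x.1.2) := fun x => frob_surj p μ _
    choose γ hγ using this
    let G : MvPolynomial (Fin 3) K := ∑ x : ι, γ x • a x.1.1
    have hG : (PowerSeries.X : PowerSeries K) ^ M0 ∣ aeval (Y Q) G := by
      refine vanish_of_der (hB Q) (u Q) (hu Q) (hder Q) M0 ?_ G ?_
      · intro n hn hnM h0
        rw [CharP.cast_eq_zero_iff K p] at h0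
        exact absurd (Nat.le_of_dvd hn h0) (by omega)
      · intro k hk
        have h1 : eval Q.1 (c k β) = 0 := by
          obtain ⟨w, hw⟩ := hFc k hk
          rw [hw, map_mul, (hS _ Q.2).1, zero_mul]
        have h2 : (eval Q.1 ((D ^ k) G)) ^ π = eval Q.1 (c k β) := by
          rw [hc]
          simp only [G, map_sum, map_smul, smul_eval, map_mul, map_pow]
          rw [sum_pow_char_pow]
          refine Finset.sum_congr rfl (fun x _ => ?_)
          rw [mul_pow, ← hπ, hγ]
          ring
        rw [h1] at h2
        exact pow_eq_zero_iff hπ0.ne' |>.mp h2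
    have hGπ : (PowerSeries.X : PowerSeries K) ^ (M0 * π) ∣
        ∑ x : ι, β x • (aeval (Y Q) (a x.1.1) ^ π * PowerSeries.C (eval Q.1 (b x.1.2))) := by
      have := pow_dvd_pow_of_dvd hG π
      rw [← pow_mul] at this
      convert this using 1
      simp only [G, map_sum, map_smul]
      rw [sum_pow_char_pow]
      refine Finset.sum_congr rfl (fun x _ => ?_)
      rw [smul_pow, ← hπ, hγ]
      simp only [PowerSeries.smul_eq_C_mul, map_mul]
      ring
    have hdiff : (PowerSeries.X : PowerSeries K) ^ (M0 * π) ∣ aeval (Y Q) h -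
        ∑ x : ι, β x • (aeval (Y Q) (a x.1.1) ^ π * PowerSeries.C (eval Q.1 (b x.1.2))) := by
      rw [hYh, ← Finset.sum_sub_distrib]
      refine Finset.dvd_sum (fun x _ => ?_)
      rw [← smul_sub, ← mul_sub]
      refine dvd_smul_of_dvd _ (dvd_mul_of_dvd_right ?_ _)
      have h1 : (PowerSeries.X : PowerSeries K) ∣ aeval (Y Q) (b x.1.2) - PowerSeries.C (eval Q.1 (b x.1.2)) := by
        apply X_dvd_of_const
        rw [map_sub, constCoeff_aeval (hB Q).const]
        simp
      have h2 := pow_dvd_pow_of_dvd h1 q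
      have h3 : (aeval (Y Q) (b x.1.2) - PowerSeries.C (eval Q.1 (b x.1.2))) ^ q =
          aeval (Y Q) (b x.1.2) ^ q - PowerSeries.C (eval Q.1 (b x.1.2)) := by
        rw [hr, sub_pow_char_pow, ← hr, ← map_pow PowerSeries.C, hq, FiniteField.pow_card]
      rw [h3] at h2
      exact (pow_dvd_pow _ hM).trans h2
    have := dvd_add hdiff hGπ
    simpa using this
  have hbz := bezout hF hirr (fun Q : S => Q.1) Y hB (by
      intro Q R hQR c hcon
      apply hQR
      have h2 := congrFun hcon 2
      simp only [Pi.smul_apply, smul_eq_mul, (hS _ Q.2).2.2, (hS _ R.2).2.2, mul_one] at h2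
      rw [← h2, one_smul] at hcon
      exact Subtype.ext hcon)
    (fun Q => if Q = P' then q * e else M0 * π) _ h hh hFh (by
      intro Q
      by_cases hQ : Q = P'
      · subst hQ; simpa using hvP
      · simpa [hQ] using hvQ Q)
  refine le_trans (le_of_eq ?_) hbz
  rw [← Finset.add_sum_erase _ _ (Finset.mem_univ P')]
  rw [Finset.sum_congr rfl (g := fun _ => M0 * π) (fun Q hQ => by simp [Finset.ne_of_mem_erase hQ])]
  simp [Finset.card_erase_of_mem]
  ring


lemma not_dvd_of_lt {K : Type*} [Field K] {F h : MvPolynomial (Fin 3) K} {d n : ℕ}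
    (hF : F.IsHomogeneous d) (hF0 : F ≠ 0) (hh : h.IsHomogeneous n) (h0 : h ≠ 0) (hn : n < d) :
    ¬ F ∣ h := by
  rintro ⟨c, rfl⟩
  have hc : c ≠ 0 := by rintro rfl; simp at h0
  have h1 := totalDegree_mul_of_isDomain hF0 hc
  rw [hF.totalDegree hF0, hh.totalDegree h0] at h1
  omega

lemma smooth_branch {K : Type*} [Field K] {F : MvPolynomial (Fin 3) K} {d : ℕ}
    (hF : F.IsHomogeneous d) {Q : Fin 3 → K} (hQ0 : Q ≠ 0) (hQ : eval Q F = 0)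
    (hs : ∃ i : Fin 3, eval Q (pderiv i F) ≠ 0) :
    ∃ Y : Fin 3 → PowerSeries K, IsBranch F Q Y := by
  obtain ⟨i, hi⟩ := hs
  have heul : ∑ i, Q i * eval Q (pderiv i F) = 0 := by
    have := congrArg (eval Q) hF.sum_X_mul_pderiv
    simpa [hQ] using this
  have : ∃ k, i ≠ k ∧ Q k ≠ 0 := by
    by_contra! hcon
    rw [Finset.sum_eq_single i (fun b _ hb => by rw [hcon b hb.symm, zero_mul]) (by simp)] at heul
    apply hQ0
    funext k
    by_cases hk : i = k
    · subst hk
      exact (mul_eq_zero.mp heul).resolve_right hi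
    · exact hcon k hk
  obtain ⟨k, hik, hk⟩ := this
  have : ∃ j : Fin 3, i ≠ j ∧ j ≠ k := by
    have : ∀ i k : Fin 3, ∃ j : Fin 3, i ≠ j ∧ j ≠ k := by decide
    exact this i k
  obtain ⟨j, hij, hjk⟩ := this
  obtain ⟨Y, hY, -⟩ := exists_branch hQ i j k hij hik hjk hi hk
  exact ⟨Y, hY⟩

/-- the polar form of `F` in direction `v` -/
noncomputable def polar {K : Type*} [Field K] (F : MvPolynomial (Fin 3) K) (v : Fin 3 → K) :
    MvPolynomial (Fin 3) K := ∑ i, C (v i) * pderiv i F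

lemma polar_homog {K : Type*} [Field K] {F : MvPolynomial (Fin 3) K} {d : ℕ}
    (hF : F.IsHomogeneous d) (v : Fin 3 → K) : (polar F v).IsHomogeneous (d - 1) := by
  refine IsHomogeneous.sum _ _ _ (fun i _ => ?_)
  exact IsHomogeneous.C_mul hF.pderiv _

lemma polar_mul_X {K : Type*} [Field K] (p : MvPolynomial (Fin 3) K) (v : Fin 3 → K) (l : Fin 3) :
    polar (p * X l) v = polar p v * X l + p * C (v l) := by
  have h1 : ∑ i, C (v i) * pderiv i (X l : MvPolynomial (Fin 3) K) = C (v l) := by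
    rw [Finset.sum_eq_single l]
    · simp
    · intro b _ hb
      rw [pderiv_X_of_ne hb.symm, mul_zero]
    · simp
  unfold polar
  rw [← h1, Finset.sum_mul, Finset.mul_sum, ← Finset.sum_add_distrib]
  refine Finset.sum_congr rfl (fun i _ => ?_)
  rw [Derivation.leibniz, smul_eq_mul, smul_eq_mul]
  ring

lemma polar_der {K : Type*} [Field K] (Q v : Fin 3 → K) (H : MvPolynomial (Fin 3) K) :
    Polynomial.derivative (aeval (fun i => Polynomial.C (Q i) + Polynomial.C (v i) * Polynomial.X) H) =
     aeval (fun i => Polynomial.C (Q i) + Polynomial.C (v i) * Polynomial.X) (polar H v) := by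
  induction H using MvPolynomial.induction_on with
  | C r => simp [polar]
  | add p q hp hq =>
    have : polar (p + q) v = polar p v + polar q v := by
      simp [polar, mul_add, Finset.sum_add_distrib]
    rw [this, map_add, map_add, map_add, hp, hq]
  | mul_X p l hp =>
    rw [polar_mul_X, map_mul, Polynomial.derivative_mul, hp, map_add, map_mul, map_mul]
    simp [Polynomial.algebraMap_apply]

lemma polar_ne_zero {K : Type*} [Field K] {F : MvPolynomial (Fin 3) K} {d : ℕ}
    (hF : F.IsHomogeneous d) (hirr : Irreducible F) (hd : 2 ≤ d)
    (hp : ∀ n : ℕ, 0 < n → n ≤ d → (n : K) ≠ 0)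
    {Q v : Fin 3 → K} (hQ0 : Q ≠ 0) (hQ : eval Q F = 0) (hv : ∀ c : K, v ≠ c • Q) :
    polar F v ≠ 0 := by
  intro hpol
  let L : Fin 3 → Polynomial K := fun i => Polynomial.C (Q i) + Polynomial.C (v i) * Polynomial.X
  have hdeg : (aeval L F).natDegree ≤ d := by
    have := aeval_natDegree_le F (m := d) (hF.totalDegree_le) L (n := 1) (fun i => by
      simp only [L]; compute_degree)
    simpa using this
  have hder : Polynomial.derivative (aeval L F) = 0 := by
    have := polar_der Q v F
    exact this.trans (by rw [hpol, map_zero])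
  have hzero : aeval L F = 0 := by
    ext n
    rw [Polynomial.coeff_zero]
    rcases n with _ | n
    · rw [Polynomial.coeff_zero_eq_eval_zero]
      have : (Polynomial.evalRingHom (0:K)).comp (aeval L : MvPolynomial (Fin 3) K →ₐ[K] _).toRingHom = eval Q := by
        apply MvPolynomial.ringHom_ext
        · intro r; simp [Polynomial.algebraMap_apply]
        · intro i; simp [L]
      have h2 := congrArg (fun f => f F) this
      simpa [hQ] using h2
    · by_cases hn : n + 1 ≤ d
      · have h1 := congrArg (fun f => Polynomial.coeff f n) hder
        simp only [Polynomial.coeff_derivative, Polynomial.coeff_zero] at h1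
        have h2 := hp (n+1) (by omega) hn
        push_cast at h2
        exact (mul_eq_zero.mp h1).resolve_right h2
      · exact Polynomial.coeff_eq_zero_of_natDegree_lt (by omega)
  let Y : Fin 3 → PowerSeries K := fun i => PowerSeries.C (Q i) + PowerSeries.C (v i) * PowerSeries.X
  have hYL : ∀ H : MvPolynomial (Fin 3) K, aeval Y H = ((aeval L H : Polynomial K) : PowerSeries K) := by
    intro H
    have : (aeval Y : MvPolynomial (Fin 3) K →ₐ[K] _).toRingHom =
      (Polynomial.coeToPowerSeries.ringHom).comp (aeval L : MvPolynomial (Fin 3) K →ₐ[K] _).toRingHom := by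
      apply MvPolynomial.ringHom_ext
      · intro r; simp [Polynomial.algebraMap_apply]
      · intro i; simp [L, Y]
    exact congrArg (fun f => f H) this
  obtain ⟨k, hk⟩ := Function.ne_iff.mp hQ0
  have hk : Q k ≠ 0 := hk
  have hj : ∃ j, Q k * v j - Q j * v k ≠ 0 := by
    by_contra! hcon
    apply hv (v k / Q k)
    funext j
    have := hcon j
    simp only [Pi.smul_apply, smul_eq_mul]
    field_simp
    linear_combination this
  obtain ⟨j, hj⟩ := hj
  have hB : IsBranch F Q Y := by
    refine ⟨fun i => by simp [Y], by rw [hYL, hzero]; simp, hQ0, C (Q k) * X j - C (Q j) * X k,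
      (isHomogeneous_C_mul_X _ _).sub (isHomogeneous_C_mul_X _ _), ?_⟩
    have : aeval Y (C (Q k) * X j - C (Q j) * X k) =
        PowerSeries.C (Q k * v j - Q j * v k) * PowerSeries.X := by
      simp [Y]
      ring
    rw [this, PowerSeries.order_mul, PowerSeries.order_X, order_zero_of_const (by simpa using hj), zero_add]
  let w : MvPolynomial (Fin 3) K := C (Q 1 * v 2 - Q 2 * v 1) * X 0 + C (Q 2 * v 0 - Q 0 * v 2) * X 1 +
    C (Q 0 * v 1 - Q 1 * v 0) * X 2
  have hw : w.IsHomogeneous 1 :=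
    ((isHomogeneous_C_mul_X _ _).add (isHomogeneous_C_mul_X _ _)).add (isHomogeneous_C_mul_X _ _)
  have hw0 : w ≠ 0 := by
    intro h0
    have e0 := congrArg (eval ![1,0,0]) h0
    have e1 := congrArg (eval ![0,1,0]) h0
    have e2 := congrArg (eval ![0,0,1]) h0
    simp [w] at e0 e1 e2
    apply hj
    fin_cases k <;> fin_cases j <;> simp <;>
      first
        | ring1
        | linear_combination e0
        | linear_combination e1
        | linear_combination e2
        | linear_combination -e0
        | linear_combination -e1
        | linear_combination -e2
  refine not_dvd_of_lt hF hirr.ne_zero hw hw0 (by omega) ?_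
  refine bezout_single hF hirr hB 1 w hw (d * 1 + 1) (by omega) ?_
  have : aeval Y w = 0 := by
    simp [w, Y]
    ring
  rw [this]
  exact dvd_zero _


lemma card_ker_eq {K : Type*} [Field K] [Fintype K] [DecidableEq K] (f : (Fin 3 → K) →ₗ[K] K) (hf : f ≠ 0) :
    (Finset.univ.filter (fun P => f P = 0)).card = Fintype.card K ^ 2 := by
  classical
  have hs : LinearMap.range f = ⊤ := LinearMap.range_eq_top.mpr (LinearMap.surjective hf)
  have h1 := LinearMap.finrank_range_add_finrank_ker f
  rw [hs, finrank_top] at h1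
  simp at h1
  have h2 : Module.finrank K (LinearMap.ker f) = 2 := by omega
  have h3 := Module.card_eq_pow_finrank (K := K) (V := LinearMap.ker f)
  rw [h2] at h3
  rw [← h3, Fintype.card_subtype]
  congr 1
  ext P
  simp

lemma card_ker_pair {K : Type*} [Field K] [Fintype K] [DecidableEq K] (f g : (Fin 3 → K) →ₗ[K] K) :
    Fintype.card K ≤ (Finset.univ.filter (fun P => f P = 0 ∧ g P = 0)).card := by
  classical
  have h1 := LinearMap.finrank_range_add_finrank_ker (f.prod g)
  have h4 := Submodule.finrank_le (LinearMap.range (f.prod g))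
  simp at h1 h4
  have h2 : 1 ≤ Module.finrank K (LinearMap.ker (f.prod g)) := by omega
  have h3 := Module.card_eq_pow_finrank (K := K) (V := LinearMap.ker (f.prod g))
  have h5 : Fintype.card K ^ 1 ≤ Fintype.card (LinearMap.ker (f.prod g)) := by
    rw [h3]; exact Nat.pow_le_pow_right Fintype.card_pos h2
  rw [pow_one, Fintype.card_subtype] at h5
  convert h5 using 3
  simp

lemma counting {K : Type*} [Field K] [Fintype K] [DecidableEq K] {ι : Type*} [Fintype ι]
    (f : ι → (Fin 3 → K) →ₗ[K] K) (hf : ∀ i, f i ≠ 0) (D : ℕ)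
    (h1 : ∀ P, P ≠ 0 → ∃ i, f i P = 0)
    (h2 : ∀ P, P ≠ 0 → (Finset.univ.filter (fun i => f i P = 0)).card ≤ D) :
    (Fintype.card ι : ℤ) * (Fintype.card ι - 1) ≤
      D * (Fintype.card ι * (Fintype.card K + 1) - (Fintype.card K ^ 2 + Fintype.card K + 1)) := by
  classical
  set N := Fintype.card ι with hN
  set q := Fintype.card K with hq
  let n : (Fin 3 → K) → ℤ := fun P => ∑ i, if f i P = 0 then 1 else 0
  have hn : ∀ P, n P = (Finset.univ.filter (fun i => f i P = 0)).card := by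
    intro P; simp [n]
  have s1 : ∑ P, n P = N * q ^ 2 := by
    simp only [n]
    rw [Finset.sum_comm]
    have : ∀ i, (∑ P : Fin 3 → K, if f i P = 0 then (1:ℤ) else 0) = q ^ 2 := by
      intro i
      have := card_ker_eq (f i) (hf i)
      rw [Finset.sum_boole, this]; push_cast; rfl
    simp [this, hN]
  have s2 : (N:ℤ) * q ^ 2 + N * (N - 1) * q ≤ ∑ P, n P ^ 2 := by
    have e : ∑ P, n P ^ 2 = ∑ i, ∑ j, ((Finset.univ.filter (fun P => f i P = 0 ∧ f j P = 0)).card : ℤ) := by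
      have : ∀ P, n P ^ 2 = ∑ i, ∑ j, if f i P = 0 ∧ f j P = 0 then (1:ℤ) else 0 := by
        intro P
        simp only [n]
        rw [sq, Finset.sum_mul_sum]
        refine Finset.sum_congr rfl (fun i _ => Finset.sum_congr rfl (fun j _ => ?_))
        by_cases hi : f i P = 0 <;> by_cases hj : f j P = 0 <;> simp [hi, hj]
      simp only [this]
      rw [Finset.sum_comm]
      refine Finset.sum_congr rfl (fun i _ => ?_)
      rw [Finset.sum_comm]
      refine Finset.sum_congr rfl (fun j _ => ?_)
      rw [Finset.sum_boole]
    rw [e]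
    have : ∀ i : ι, (q:ℤ) ^ 2 + (N - 1) * q ≤
        ∑ j, ((Finset.univ.filter (fun P => f i P = 0 ∧ f j P = 0)).card : ℤ) := by
      intro i
      rw [← Finset.add_sum_erase _ _ (Finset.mem_univ i)]
      have c1 := card_ker_eq (f i) (hf i)
      have c2 : ∑ j ∈ Finset.univ.erase i, (q:ℤ) ≤ ∑ j ∈ Finset.univ.erase i, ((Finset.univ.filter (fun P => f i P = 0 ∧ f j P = 0)).card : ℤ) := by
        refine Finset.sum_le_sum (fun j _ => ?_)
        exact_mod_cast card_ker_pair (f i) (f j)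
      have c3 : ∑ j ∈ Finset.univ.erase i, (q:ℤ) = (N - 1) * q := by
        have : 1 ≤ N := Fintype.card_pos_iff.mpr ⟨i⟩
        rw [Finset.sum_const, Finset.card_erase_of_mem (Finset.mem_univ _), Finset.card_univ, ← hN]
        simp [this]
      simp only [and_self]
      rw [c1]; push_cast
      linarith
    have := Finset.sum_le_sum (s := Finset.univ) (fun i (_ : i ∈ Finset.univ) => this i)
    refine le_trans (le_of_eq ?_) this
    rw [Finset.sum_const, Finset.card_univ, ← hN, nsmul_eq_mul]
    ring
  have s0 : 0 ≤ ∑ P ∈ Finset.univ.erase (0 : Fin 3 → K), (n P - 1) * (D - n P) := by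
    refine Finset.sum_nonneg (fun P hP => ?_)
    have hP0 := Finset.ne_of_mem_erase hP
    refine mul_nonneg ?_ ?_
    · obtain ⟨i, hi⟩ := h1 P hP0
      have : 0 < (Finset.univ.filter (fun i => f i P = 0)).card := Finset.card_pos.mpr ⟨i, by simp [hi]⟩
      rw [hn]; omega
    · have := h2 P hP0
      rw [hn]; omega
  have n0 : n 0 = N := by simp [n, hN]
  have c0 : (Fintype.card (Fin 3 → K) : ℤ) = q ^ 3 := by simp [hq]
  have e0 : ∑ P ∈ Finset.univ.erase (0 : Fin 3 → K), (n P - 1) * (D - n P) =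
      (D + 1) * (N * q ^ 2) - ∑ P, n P ^ 2 - D * q ^ 3 - (N - 1) * (D - N) := by
    have := Finset.add_sum_erase Finset.univ (fun P => (n P - 1) * (D - n P)) (Finset.mem_univ (0 : Fin 3 → K))
    rw [n0] at this
    have e3 : ∑ P, (n P - 1) * (D - n P) = (D + 1) * (N * q ^ 2) - ∑ P, n P ^ 2 - D * q ^ 3 := by
      rw [← s1, Finset.mul_sum, ← Finset.sum_sub_distrib, ← c0, ← Finset.card_univ, mul_comm (D:ℤ), ← nsmul_eq_mul,
        ← Finset.sum_const, ← Finset.sum_sub_distrib]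
      exact Finset.sum_congr rfl (fun P _ => by ring)
    linarith
  have hq1 : (0:ℤ) < q - 1 := by
    have : 1 < q := Fintype.one_lt_card
    omega
  rw [e0] at s0
  refine le_of_mul_le_mul_right ?_ hq1
  nlinarith


lemma eval_smul_homog {K : Type*} [Field K] {F : MvPolynomial (Fin 3) K} {d : ℕ}
    (hF : F.IsHomogeneous d) (c : K) (Q : Fin 3 → K) : eval (c • Q) F = c ^ d * eval Q F := by
  rw [eval_eq', eval_eq', Finset.mul_sum]
  refine Finset.sum_congr rfl (fun m hm => ?_)
  have h1 : ∑ i, m i = d := by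
    have := hF (mem_support_iff.mp hm)
    rw [← this, Finsupp.weight_apply, Finsupp.sum_fintype _ _ (by simp)]
    simp
  simp only [Pi.smul_apply, smul_eq_mul, mul_pow, Finset.prod_mul_distrib]
  rw [Finset.prod_pow_eq_pow_sum, h1]
  ring

/-- normalised homogeneous coordinates -/
def Nrm {K : Type*} [Field K] (Q : Fin 3 → K) : Prop :=
  Q 2 = 1 ∨ (Q 2 = 0 ∧ Q 1 = 1) ∨ (Q 2 = 0 ∧ Q 1 = 0 ∧ Q 0 = 1)

lemma nrm_exists {K : Type*} [Field K] {Q : Fin 3 → K} (hQ : Q ≠ 0) :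
    ∃ c : K, c ≠ 0 ∧ Nrm (c • Q) := by
  by_cases h2 : Q 2 = 0
  · by_cases h1 : Q 1 = 0
    · by_cases h0 : Q 0 = 0
      · exfalso; apply hQ; funext i; fin_cases i <;> simp [h0, h1, h2]
      · exact ⟨(Q 0)⁻¹, inv_ne_zero h0, by right; right; simp [h0, h1, h2]⟩
    · exact ⟨(Q 1)⁻¹, inv_ne_zero h1, by right; left; simp [h1, h2]⟩
  · exact ⟨(Q 2)⁻¹, inv_ne_zero h2, by left; simp [h2]⟩

lemma nrm_unique {K : Type*} [Field K] {Q R : Fin 3 → K} (hQ : Nrm Q) (hR : Nrm R) (c : K)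
    (h : Q = c • R) : Q = R := by
  have hc : c = 1 := by
    have e0 := congrFun h 0
    have e1 := congrFun h 1
    have e2 := congrFun h 2
    simp only [Pi.smul_apply, smul_eq_mul] at e0 e1 e2
    rcases hQ with hQ | ⟨hQ, hQ'⟩ | ⟨hQ, hQ', hQ''⟩ <;>
    rcases hR with hR | ⟨hR, hR'⟩ | ⟨hR, hR', hR''⟩ <;> simp_all
  rw [h, hc, one_smul]

lemma smooth_smul {K : Type*} [Field K] {F : MvPolynomial (Fin 3) K} {d : ℕ}
    (hF : F.IsHomogeneous d) {c : K} (hc : c ≠ 0) {Q : Fin 3 → K} (h : SmoothPoint F Q) :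
    SmoothPoint F (c • Q) := by
  obtain ⟨h1, h2, i, h3⟩ := h
  refine ⟨smul_ne_zero hc h1, by rw [eval_smul_homog hF, h2, mul_zero], i, ?_⟩
  rw [eval_smul_homog hF.pderiv]
  exact mul_ne_zero (pow_ne_zero _ hc) h3

lemma tangent_smul {K : Type*} [Field K] {F : MvPolynomial (Fin 3) K} {d : ℕ}
    (hF : F.IsHomogeneous d) (c : K) {Q P : Fin 3 → K} (h : OnTangentLine F Q P) :
    OnTangentLine F (c • Q) P := by
  unfold OnTangentLine at *
  rw [eval_smul_homog hF.pderiv, eval_smul_homog hF.pderiv, eval_smul_homog hF.pderiv]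
  linear_combination c ^ (d - 1) * h

lemma eval_polar {K : Type*} [Field K] (F : MvPolynomial (Fin 3) K) (Q P : Fin 3 → K) :
    eval Q (polar F P) = eval Q (pderiv 0 F) * P 0 + eval Q (pderiv 1 F) * P 1 + eval Q (pderiv 2 F) * P 2 := by
  simp [polar, Fin.sum_univ_three]
  ring

lemma filling_polar {K : Type*} [Field K] {F : MvPolynomial (Fin 3) K} {d : ℕ} (hd : 2 ≤ d)
    (hF : F.IsHomogeneous d) (hirr : Irreducible F)
    (hp : ∀ n : ℕ, 0 < n → n ≤ d → (n : K) ≠ 0) (hfill : TangentFilling F)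
    (v : Fin 3 → K) (hv : v ≠ 0) : polar F v ≠ 0 := by
  by_cases hex : ∃ Q, SmoothPoint F Q ∧ ∀ c : K, v ≠ c • Q
  · obtain ⟨Q, ⟨h0, h1, -⟩, h2⟩ := hex
    exact polar_ne_zero hF hirr hd hp h0 h1 h2
  exfalso
  push Not at hex
  have key : ∀ Q, SmoothPoint F Q → ∃ c : K, c ≠ 0 ∧ v = c • Q := by
    intro Q hQ
    obtain ⟨c, hc⟩ := hex Q hQ
    refine ⟨c, ?_, hc⟩
    rintro rfl
    exact hv (by simpa using hc)
  obtain ⟨Q0, hQ0, -⟩ := hfill v hv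
  obtain ⟨c, hc, hcv⟩ := key Q0 hQ0
  have hsv : SmoothPoint F v := hcv ▸ smooth_smul hF hc hQ0
  obtain ⟨-, -, i, hi⟩ := hsv
  obtain ⟨Q, hQ, hQt⟩ := hfill (Pi.single i 1) (by simp)
  obtain ⟨c', -, hcv'⟩ := key Q hQ
  have h1 := tangent_smul hF c' hQt
  rw [← hcv'] at h1
  unfold OnTangentLine at h1
  apply hi
  fin_cases i <;> simpa using h1

lemma filling_main {K : Type*} [Field K] [Fintype K] {F : MvPolynomial (Fin 3) K} {d : ℕ} (hd : 2 ≤ d)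
    (hF : F.IsHomogeneous d) (hirr : Irreducible F)
    (hp : ∀ n : ℕ, 0 < n → n ≤ d → (n : K) ≠ 0) (hfill : TangentFilling F) :
    ∃ (S : Finset (Fin 3 → K)) (N : ℕ),
      (∀ Q ∈ S, eval Q F = 0 ∧ (∃ i : Fin 3, eval Q (pderiv i F) ≠ 0) ∧ Q 2 = 1) ∧
      N ≤ S.card + d ∧
      (N : ℤ) * (N - 1) ≤ (d * (d - 1) : ℕ) * (N * (Fintype.card K + 1) -
        (Fintype.card K ^ 2 + Fintype.card K + 1)) := by
  classical
  let Ω : Finset (Fin 3 → K) := Finset.univ.filter (fun Q => Nrm Q ∧ SmoothPoint F Q)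
  have hΩ : ∀ Q ∈ Ω, Nrm Q ∧ SmoothPoint F Q := fun Q hQ => (Finset.mem_filter.mp hQ).2
  have hbr : ∀ Q : Ω, ∃ Y, IsBranch F Q.1 Y := fun Q =>
    smooth_branch hF (hΩ _ Q.2).2.1 (hΩ _ Q.2).2.2.1 (hΩ _ Q.2).2.2.2
  choose Y hY using hbr
  have bz : ∀ (T : Finset Ω) (n : ℕ) (h : MvPolynomial (Fin 3) K), h.IsHomogeneous n → ¬ F ∣ h →
      (∀ Q ∈ T, eval Q.1 h = 0) → T.card ≤ d * n := by
    intro T n h hh hFh hT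
    have := bezout hF hirr (fun Q : T => Q.1.1) (fun Q => Y Q.1) (fun Q => hY Q.1) (by
      intro Q R hQR c hcon
      apply hQR
      exact Subtype.ext (Subtype.ext (nrm_unique (hΩ _ Q.1.2).1 (hΩ _ R.1.2).1 c hcon)))
      (fun _ => 1) n h hh hFh (by
        intro Q
        rw [pow_one]
        apply X_dvd_of_const
        rw [constCoeff_aeval (hY Q.1).const]
        exact hT _ Q.2)
    simpa using this
  refine ⟨Ω.filter (fun Q => Q 2 = 1), Ω.card, ?_, ?_, ?_⟩
  · intro Q hQ
    have h1 := Finset.mem_filter.mp hQ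
    have h2 := hΩ _ h1.1
    exact ⟨h2.2.2.1, h2.2.2.2, h1.2⟩
  · have h1 : (Ω.filter (fun Q => Q 2 = 1)).card + (Ω.filter (fun Q => ¬ Q 2 = 1)).card = Ω.card :=
      Finset.card_filter_add_card_filter_not _
    have h2 := bz (Finset.univ.filter (fun Q : Ω => ¬ Q.1 2 = 1)) 1 (X 2) (isHomogeneous_X _ _)
      (not_dvd_of_lt hF hirr.ne_zero (isHomogeneous_X _ _) (X_ne_zero _) (by omega)) (by
        intro Q hQ
        have h3 := (Finset.mem_filter.mp hQ).2
        rw [eval_X]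
        rcases (hΩ _ Q.2).1 with h | h | h
        · exact absurd h h3
        · exact h.1
        · exact h.1)
    have h4 : (Ω.filter (fun Q => ¬ Q 2 = 1)).card ≤ (Finset.univ.filter (fun Q : Ω => ¬ Q.1 2 = 1)).card := by
      rw [← Finset.card_map (Function.Embedding.subtype _)]
      apply Finset.card_le_card
      intro Q hQ
      have h5 := Finset.mem_filter.mp hQ
      rw [Finset.mem_map]
      exact ⟨⟨Q, h5.1⟩, by simp [h5.2], rfl⟩
    omega
  · let f : Ω → (Fin 3 → K) →ₗ[K] K := fun Q =>
      Fintype.linearCombination K (fun i => eval Q.1 (pderiv i F))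
    have hf : ∀ Q P, f Q P = eval Q.1 (polar F P) := by
      intro Q P
      simp [f, Fintype.linearCombination_apply, polar]
    have := counting f ?_ (d * (d - 1)) ?_ ?_
    · simpa only [Fintype.card_coe] using this
    · intro Q h0
      obtain ⟨i, hi⟩ := (hΩ _ Q.2).2.2.2
      apply hi
      have := congrArg (fun g => g (Pi.single i 1)) h0
      simpa [f] using this
    · intro P hP
      obtain ⟨Q, hQ, hQt⟩ := hfill P hP
      obtain ⟨c, hc, hcn⟩ := nrm_exists hQ.1
      refine ⟨⟨c • Q, by simp only [Ω, Finset.mem_filter]; exact ⟨Finset.mem_univ _, hcn, smooth_smul hF hc hQ⟩⟩, ?_⟩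
      rw [hf, eval_polar]
      exact tangent_smul hF c hQt
    · intro P hP
      refine bz _ (d - 1) (polar F P) (polar_homog hF P)
        (not_dvd_of_lt hF hirr.ne_zero (polar_homog hF P) (filling_polar hd hF hirr hp hfill P hP) (by omega)) ?_
      intro Q hQ
      rw [← hf]
      exact (Finset.mem_filter.mp hQ).2


lemma param_id (d δ θ : ℝ) (hδ : θ = 1 - δ) : θ * (d * (d - 1) ^ 3) - 1 -
      (d * (d - 1) - 2) * ((d - 1) * (d - 2) / 2 + 5 / 4 + (d ^ 2 - 2 * d + 2) / 2 * θ ^ 2) =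
      (d ^ 3 / 2 - 3 / 4 * d ^ 2 - 11 / 4 * d + 11 / 2) - δ * (d ^ 2 - 3 * d + 4)
        - (d - 2) * ((d ^ 2 - 2 * d + 2) / 2) * ((d + 1) * δ ^ 2) := by
  rw [hδ]; ring

lemma param_case1 (d δ : ℝ) (hd : 3 ≤ d) (hδ : δ = 0) :
    0 ≤ (d ^ 3 / 2 - 3 / 4 * d ^ 2 - 11 / 4 * d + 11 / 2) - δ * (d ^ 2 - 3 * d + 4)
        - (d - 2) * ((d ^ 2 - 2 * d + 2) / 2) * ((d + 1) * δ ^ 2) := by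
  obtain ⟨t, ht⟩ : ∃ t : ℝ, d = 3 + t := ⟨d - 3, by ring⟩
  have ht0 : 0 ≤ t := by linarith
  rw [hδ, ht]
  have h : (3 + t) ^ 3 / 2 - 3 / 4 * (3 + t) ^ 2 - 11 / 4 * (3 + t) + 11 / 2 =
    t ^ 3 / 2 + 15 / 4 * t ^ 2 + 25 / 4 * t + 4 := by ring
  rw [h]
  have : 0 ≤ t ^ 3 / 2 + 15 / 4 * t ^ 2 + 25 / 4 * t + 4 := by positivity
  linarith

lemma param_case2 (d δ : ℝ) (hd : 3 ≤ d) (hd3 : δ ≤ 1 / 3) (hdd : (d + 1) * δ ^ 2 ≤ 1) :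
    0 ≤ (d ^ 3 / 2 - 3 / 4 * d ^ 2 - 11 / 4 * d + 11 / 2) - δ * (d ^ 2 - 3 * d + 4)
        - (d - 2) * ((d ^ 2 - 2 * d + 2) / 2) * ((d + 1) * δ ^ 2) := by
  have hpos : (0:ℝ) ≤ (d - 2) * ((d ^ 2 - 2 * d + 2) / 2) := by
    apply mul_nonneg <;> nlinarith
  have t1 := mul_le_mul_of_nonneg_left hdd hpos
  have t2 : δ * (d ^ 2 - 3 * d + 4) ≤ 1 / 3 * (d ^ 2 - 3 * d + 4) := by
    apply mul_le_mul_of_nonneg_right hd3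
    nlinarith
  nlinarith [sq_nonneg (d - 57 / 22)]

set_option maxHeartbeats 1000000 in
/-- choice of the parameter `x` -/
lemma param_exists (d κ k r g : ℕ) (hd : 3 ≤ d) (hg : 2 * g = (d - 1) * (d - 2))
    (hk1 : k ^ 2 ≤ κ) (hk2 : κ < (k + 1) ^ 2) (hκ : κ = 1 ∨ d + 1 ≤ κ)
    (hq : d ^ 2 * (d - 1) ^ 6 ≤ κ * r ^ 2) :
    ∃ x : ℕ, 1 ≤ x ∧ 2 * ((d:ℝ) ^ 2 - 2 * d + 2) * k ^ 2 + κ < 4 * κ * x ∧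
      ((x:ℝ) + g) * (d * (d - 1) - 2) + 1 ≤ k * r ∧
      4 * (x:ℝ) + 2 * (d * (d - 1)) ≤ d * (d - 1) ^ 3 ∧
      (k:ℝ) * (d * (d - 1) ^ 3) ≤ κ * r := by
  have hκ0 : 0 < κ := by omega
  have hdR : (3:ℝ) ≤ d := by exact_mod_cast hd
  have hgR : 2 * (g:ℝ) = (d - 1) * (d - 2) := by
    have := congrArg (Nat.cast (R := ℝ)) hg
    push_cast [Nat.cast_sub (show 1 ≤ d by omega), Nat.cast_sub (show 2 ≤ d by omega)] at this
    exact this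
  have hqR : ((d:ℝ) * (d - 1) ^ 3) ^ 2 ≤ κ * r ^ 2 := by
    have : ((d ^ 2 * (d - 1) ^ 6 : ℕ) : ℝ) ≤ ((κ * r ^ 2 : ℕ) : ℝ) := by exact_mod_cast hq
    push_cast [Nat.cast_sub (show 1 ≤ d by omega)] at this
    linarith [this, (by ring : ((d:ℝ) * (d - 1) ^ 3) ^ 2 = d ^ 2 * (d - 1) ^ 6)]
  have hk1R : (k:ℝ) ^ 2 ≤ κ := by exact_mod_cast hk1
  have hk2R : (κ:ℝ) < (k + 1) ^ 2 := by exact_mod_cast hk2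
  have hκR : (0:ℝ) < κ := by exact_mod_cast hκ0
  have hk0 : 1 ≤ k := by
    by_contra h
    have : k = 0 := by omega
    subst this
    simp at hk2
    omega
  have hk0R : (1:ℝ) ≤ k := by exact_mod_cast hk0
  set s := Real.sqrt κ with hs
  have hs2 : s ^ 2 = κ := Real.sq_sqrt hκR.le
  have hs0 : 0 < s := Real.sqrt_pos.mpr hκR
  have hks : (k:ℝ) ≤ s := Real.le_sqrt_of_sq_le hk1R
  have hsk : s < k + 1 := by
    rw [hs, Real.sqrt_lt' (by linarith)]; exact hk2R
  have hr0 : (0:ℝ) ≤ r := Nat.cast_nonneg _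
  have hR0 : (0:ℝ) ≤ (d:ℝ) * (d - 1) ^ 3 := by
    have : (0:ℝ) ≤ d - 1 := by linarith
    positivity
  have hsr : (d:ℝ) * (d - 1) ^ 3 ≤ s * r := by
    refine le_of_sq_le_sq ?_ (mul_nonneg hs0.le hr0)
    have h1 : (s * r) ^ 2 = κ * r ^ 2 := by rw [mul_pow, hs2]
    rw [h1]; exact hqR
  -- the number θ = k / s
  obtain ⟨θ, hθ⟩ : ∃ θ : ℝ, θ * s = k := ⟨k / s, by field_simp⟩
  have hθ1 : θ ≤ 1 := by
    by_contra h
    push Not at h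
    nlinarith
  have hθ0 : 0 < θ := by
    by_contra h
    push Not at h
    nlinarith
  have hM : θ * (d * (d - 1) ^ 3) ≤ k * r := by
    rw [← hθ]; nlinarith
  have hθκ : θ ^ 2 * κ = k ^ 2 := by rw [← hs2, ← hθ]; ring
  have hE : 0 ≤ θ * (d * (d - 1) ^ 3) - 1 -
      (d * (d - 1) - 2) * (g + 5 / 4 + ((d:ℝ) ^ 2 - 2 * d + 2) / 2 * θ ^ 2) := by
    have hg' : (g:ℝ) = (d - 1) * (d - 2) / 2 := by linarith
    rw [hg']
    obtain ⟨δ, hδ⟩ : ∃ δ : ℝ, θ = 1 - δ := ⟨1 - θ, by ring⟩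
    have hδ0 : 0 ≤ δ := by linarith
    rw [param_id _ _ _ hδ]
    rcases hκ with h1 | h2
    · have hs1 : s = 1 := by rw [hs, h1]; simp
      have hk' : (k:ℝ) = 1 := le_antisymm (by linarith) hk0R
      have : δ = 0 := by rw [hs1, hk'] at hθ; linarith
      exact param_case1 _ _ hdR this
    · have h2R : (d:ℝ) + 1 ≤ κ := by exact_mod_cast h2
      have hk2' : (2:ℝ) ≤ k := by
        have : 1 < k := by
          by_contra h
          have hk' : k = 1 := by omega
          rw [hk'] at hk2
          omega
        exact_mod_cast this
      have hds : δ * s < 1 := by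
        have : δ * s = s - k := by rw [← hθ, hδ]; ring
        linarith
      have hd3 : δ ≤ 1 / 3 := by
        have h5 : θ * (k + 1) ≥ k := by
          have := mul_le_mul_of_nonneg_left hsk.le hθ0.le
          linarith
        by_contra h
        push Not at h
        rw [hδ] at h5
        have h6 : 1 / 3 * ((k:ℝ) + 1) < δ * (k + 1) := mul_lt_mul_of_pos_right h (by linarith)
        linarith
      have hdd : (d + 1) * δ ^ 2 ≤ 1 := by
        have h7 : δ ^ 2 * κ ≤ 1 := by
          rw [← hs2, ← mul_pow]
          have : 0 ≤ δ * s := by positivity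
          exact pow_le_one₀ this hds.le
        have h8 := mul_le_mul_of_nonneg_left h2R (sq_nonneg δ)
        linarith
      exact param_case2 _ _ hdR hd3 hdd
  -- definition of x
  set c2 : ℕ := (d - 1) ^ 2 + 1 with hc2
  have hc2R : (c2:ℝ) = (d:ℝ) ^ 2 - 2 * d + 2 := by
    rw [hc2]; push_cast [Nat.cast_sub (show 1 ≤ d by omega)]; ring
  set a := 2 * c2 * k ^ 2 + κ with ha
  have hx1 : a < 4 * κ * (a / (4 * κ) + 1) := by
    have := Nat.lt_mul_div_succ a (show 0 < 4 * κ by omega)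
    simpa using this
  have hx2 : 4 * κ * (a / (4 * κ)) ≤ a := Nat.mul_div_le _ _
  set y := a / (4 * κ) with hy
  have hx2R : 4 * (κ:ℝ) * y ≤ 2 * c2 * k ^ 2 + κ := by
    have : ((4 * κ * y : ℕ) : ℝ) ≤ (a : ℕ) := by exact_mod_cast hx2
    rw [ha] at this
    push_cast at this
    exact this
  have hy1 : (y:ℝ) ≤ 1 / 4 + c2 / 2 * θ ^ 2 := by
    have : 4 * (κ:ℝ) * y ≤ 4 * κ * (1 / 4 + c2 / 2 * θ ^ 2) := by
      refine hx2R.trans (le_of_eq ?_)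
      rw [← hθκ]; ring
    exact le_of_mul_le_mul_left this (by linarith)
  have hy2 : 4 * y ≤ 2 * c2 + 1 := by
    have h1 : 4 * κ * y ≤ κ * (2 * c2 + 1) := by
      refine hx2.trans ?_
      rw [ha]
      nlinarith
    refine Nat.le_of_mul_le_mul_left ?_ hκ0
    linarith
  refine ⟨y + 1, by omega, ?_, ?_, ?_, ?_⟩
  · have : ((a : ℕ) : ℝ) < ((4 * κ * (y + 1) : ℕ) : ℝ) := by exact_mod_cast hx1
    rw [ha] at this
    push_cast at this
    rw [hc2R] at this
    push_cast
    exact this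
  · push_cast
    refine le_trans ?_ hM
    have hD : (0:ℝ) ≤ d * (d - 1) - 2 := by nlinarith
    have h1 : ((y:ℝ) + 1 + g) * (d * (d - 1) - 2) ≤ (1 / 4 + c2 / 2 * θ ^ 2 + 1 + g) * (d * (d - 1) - 2) := by
      apply mul_le_mul_of_nonneg_right _ hD
      linarith
    rw [hc2R] at h1
    linarith
  · push_cast
    rcases Nat.lt_or_ge 3 d with h4 | h3
    · have h4R : (4:ℝ) ≤ d := by exact_mod_cast h4
      have hy2R : 4 * (y:ℝ) ≤ 2 * c2 + 1 := by exact_mod_cast hy2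
      rw [hc2R] at hy2R
      have : (d:ℝ) * 9 * (d - 1) ≤ d * (d - 1) ^ 3 := by
        have h9 : (9:ℝ) ≤ (d - 1) ^ 2 := by nlinarith
        have h10 : (0:ℝ) ≤ d * (d - 1) := by nlinarith
        nlinarith
      nlinarith
    · have hd3 : d = 3 := by omega
      subst hd3
      norm_num at hc2
      have : y ≤ 2 := by omega
      have : (y:ℝ) ≤ 2 := by exact_mod_cast this
      norm_num
      linarith
  · have : (k:ℝ) * (d * (d - 1) ^ 3) ≤ k * (s * r) := mul_le_mul_of_nonneg_left hsr (by linarith)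
    have h2 : (k:ℝ) * (s * r) ≤ s * (s * r) := mul_le_mul_of_nonneg_right hks (by positivity)
    rw [← hs2]
    nlinarith


lemma sum_arith (k a b : ℕ) :
    (2:ℝ) * ((∑ j ∈ Finset.range k, (a + j * b) : ℕ) : ℝ) = 2 * k * a + b * (k * (k - 1)) := by
  induction k with
  | zero => simp
  | succ n ih =>
    rw [Finset.sum_range_succ]
    push_cast at ih ⊢
    linarith

lemma count_real (d g κ k r x L mm : ℝ) (hd : 3 ≤ d) (hg : 2 * g = (d - 1) * (d - 2))
    (hk : 1 ≤ k) (hr : 1 ≤ r) (hx : 0 ≤ x)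
    (hx1 : 2 * (d ^ 2 - 2 * d + 2) * k ^ 2 + κ < 4 * κ * x)
    (hx2 : (x + g) * (d * (d - 1) - 2) + 1 ≤ k * r)
    (hx3 : 4 * x + 2 * (d * (d - 1)) ≤ d * (d - 1) ^ 3)
    (hx4 : k * (d * (d - 1) ^ 3) ≤ κ * r)
    (hL : κ * r ^ 2 ≤ d * r * (L + 1)) (hmm : d * mm + 2 ≤ k * r + x + g + d) :
    2 * k * (d * (L * r + mm) + 1) + d * (d - 2) * r * (k * (k - 1)) <
      2 * ((d * L + 1 - g) * (k * r + x)) := by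
  have hg' : g = (d - 1) * (d - 2) / 2 := by linarith
  have hg0 : 0 ≤ g := by nlinarith
  have hpa : x * (d * (d - 1)) ≤ d * (k * r) := by
    have h1 : x * (d - 1) ≤ x * (d * (d - 1) - 2) := by
      apply mul_le_mul_of_nonneg_left _ hx; nlinarith
    have h2 : 0 ≤ g * (d * (d - 1) - 2) := by
      apply mul_nonneg hg0; nlinarith
    have h3 : x * (d - 1) ≤ k * r := by linarith
    have := mul_le_mul_of_nonneg_left h3 (show 0 ≤ d by linarith)
    linarith
  have hpb : k * (4 * x + 2 * (d * (d - 1))) ≤ κ * r :=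
    (mul_le_mul_of_nonneg_left hx3 (by linarith)).trans hx4
  have hsuff : 0 ≤ r * κ / 4 + r * k * d / 2 - (x * (d * (d - 1)) / 2 + k * (x + d * (d - 1) / 2)) := by
    linarith
  have hr0 : 0 < r := by linarith
  have h1 : 0 < r * (x * κ - (d ^ 2 - 2 * d + 2) / 2 * k ^ 2 - κ / 4) := by
    apply mul_pos hr0; linarith
  have h2 : k * r * (d * mm + 2) ≤ k * r * (k * r + x + g + d) :=
    mul_le_mul_of_nonneg_left hmm (by positivity)
  have h3 : x * (κ * r ^ 2) ≤ x * (d * r * (L + 1)) := mul_le_mul_of_nonneg_left hL hx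
  have h4 : 0 < r * (r * (x * κ - (d ^ 2 - 2 * d + 2) / 2 * k ^ 2 - κ / 4) +
    (r * κ / 4 + r * k * d / 2 - (x * (d * (d - 1)) / 2 + k * (x + d * (d - 1) / 2)))) := by
    apply mul_pos hr0; linarith
  refine lt_of_mul_lt_mul_left ?_ hr0.le
  subst hg'
  linarith

lemma count_nat (d g κ k r x L mm nI : ℕ) (hd : 3 ≤ d) (hg : 2 * g = (d - 1) * (d - 2))
    (hk : 1 ≤ k) (hr : 1 ≤ r)
    (hx1 : 2 * ((d:ℝ) ^ 2 - 2 * d + 2) * k ^ 2 + κ < 4 * κ * x)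
    (hx2 : ((x:ℝ) + g) * (d * (d - 1) - 2) + 1 ≤ k * r)
    (hx3 : 4 * (x:ℝ) + 2 * (d * (d - 1)) ≤ d * (d - 1) ^ 3)
    (hx4 : (k:ℝ) * (d * (d - 1) ^ 3) ≤ κ * r)
    (hL : κ * r ^ 2 ≤ d * r * (L + 1)) (hmm : d * mm + 2 ≤ k * r + x + g + d)
    (hnI : nI + g = d * L + 1) :
    ∑ j ∈ Finset.range k, (d * ((L + j * (d - 2)) * r + mm) + 1) < nI * (k * r + x) := by
  have hdR : (3:ℝ) ≤ d := by exact_mod_cast hd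
  have hgR : 2 * (g:ℝ) = (d - 1) * (d - 2) := by
    have := congrArg (Nat.cast (R := ℝ)) hg
    push_cast [Nat.cast_sub (show 1 ≤ d by omega), Nat.cast_sub (show 2 ≤ d by omega)] at this
    exact this
  have key := count_real d g κ k r x L mm hdR hgR (by exact_mod_cast hk) (by exact_mod_cast hr)
    (Nat.cast_nonneg _) hx1 hx2 hx3 hx4 (by exact_mod_cast hL) (by exact_mod_cast hmm)
  have e1 : ∑ j ∈ Finset.range k, (d * ((L + j * (d - 2)) * r + mm) + 1) =
      ∑ j ∈ Finset.range k, ((d * (L * r + mm) + 1) + j * (d * (d - 2) * r)) :=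
    Finset.sum_congr rfl fun j _ => by ring
  rw [e1]
  have e2 := sum_arith k (d * (L * r + mm) + 1) (d * (d - 2) * r)
  have e3 : (nI:ℝ) = d * L + 1 - g := by
    have := congrArg (Nat.cast (R := ℝ)) hnI
    push_cast at this
    linarith
  have : ((∑ j ∈ Finset.range k, ((d * (L * r + mm) + 1) + j * (d * (d - 2) * r)) : ℕ) : ℝ) <
      ((nI * (k * r + x) : ℕ) : ℝ) := by
    rw [Nat.cast_mul nI, e3]
    have e4 : ((d * (d - 2) * r : ℕ) : ℝ) = d * (d - 2) * r := by
      push_cast [Nat.cast_sub (show 2 ≤ d by omega)]; ring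
    rw [e4] at e2
    have e5 : ((d * (L * r + mm) + 1 : ℕ) : ℝ) = d * (L * r + mm) + 1 := by push_cast; ring
    rw [e5] at e2
    have e6 : ((k * r + x : ℕ) : ℝ) = k * r + x := by push_cast; ring
    rw [e6]
    linarith
  exact_mod_cast this

/-- final contradiction: real inequality -/
lemma final_real (D q s N : ℝ) (hD : 6 ≤ D) (hs0 : 0 ≤ s) (hq : 0 < q)
    (hs : s * (D - 2) + 2 * (D - 1) ≤ q) (hN : N ≤ q + 1 + s) :
    0 < N * (N - 1) - D * (N * (q + 1) - (q ^ 2 + q + 1)) := by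
  have hU : 0 < (q + 1 + s) * (q + 1 + s - 1) - D * ((q + 1 + s) * (q + 1) - (q ^ 2 + q + 1)) := by
    have h1 : s * (D - 2) * q + 2 * (D - 1) * q ≤ q * q := by nlinarith
    have h2 : s * (D - 2) ≤ q - 2 * (D - 1) := by linarith
    nlinarith [sq_nonneg s]
  have hsq : s ≤ q := by nlinarith
  have hdec : 0 ≤ (q + 1 + s - N) * (D * (q + 1) + 1 - (q + 1 + s) - N) := by
    apply mul_nonneg (by linarith)
    nlinarith
  nlinarith


lemma choose_count (d g l n : ℕ) (hd : 3 ≤ d) (hg : 2 * g = (d - 1) * (d - 2))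
    (hn : n + g = d * (l + d) + 1) : n + (l + 2).choose 2 ≤ (l + d + 2).choose 2 := by
  have h1 := two_mul_choose_two l
  have h2 := two_mul_choose_two (l + d)
  obtain ⟨t, rfl⟩ : ∃ t, d = t + 2 := ⟨d - 2, by omega⟩
  have hg' : 2 * g = (t + 1) * t := by
    rw [hg]; congr 1
  nlinarith

set_option maxHeartbeats 1000000 in
lemma main_ge3 {K : Type*} [Field K] [Fintype K] {d : ℕ} (hd : 3 ≤ d)
    {F : MvPolynomial (Fin 3) K} (hF : F.IsHomogeneous d) (hirr : Irreducible F)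
    (p α : ℕ) [hpF : Fact p.Prime] [CharP K p] (hcard : Fintype.card K = p ^ α) (hpd : d < p)
    (hq : d ^ 2 * (d - 1) ^ 6 ≤ Fintype.card K)
    (S : Finset (Fin 3 → K))
    (hS : ∀ Q ∈ S, eval Q F = 0 ∧ (∃ i, eval Q (pderiv i F) ≠ 0) ∧ Q 2 = 1) (N : ℕ)
    (hN : N ≤ S.card + d)
    (hfill : (N:ℤ) * (N - 1) ≤ (d * (d - 1) : ℕ) *
      (N * (Fintype.card K + 1) - ((Fintype.card K) ^ 2 + Fintype.card K + 1))) : False := by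
  classical
  have hp2 := hpF.out.two_le
  obtain ⟨μ, κ, hqκ, hκ⟩ : ∃ μ κ : ℕ, Fintype.card K = κ * (p ^ μ) ^ 2 ∧ (κ = 1 ∨ κ = p) := by
    rcases Nat.even_or_odd' α with ⟨c, h | h⟩
    · exact ⟨c, 1, by rw [hcard, h, one_mul, ← pow_mul, mul_comm], Or.inl rfl⟩
    · exact ⟨c, p, by rw [hcard, h, ← pow_mul]; ring, Or.inr rfl⟩
  obtain ⟨q, hqd⟩ : ∃ q, q = Fintype.card K := ⟨_, rfl⟩
  obtain ⟨r, hrd⟩ : ∃ r, r = p ^ μ := ⟨_, rfl⟩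
  have hr1 : 1 ≤ r := by rw [hrd]; exact Nat.one_le_pow _ _ (by omega)
  rw [← hqd] at hq hfill hqκ
  rw [← hrd] at hqκ
  obtain ⟨g, hg⟩ : ∃ g, 2 * g = (d - 1) * (d - 2) := by
    obtain ⟨t, rfl⟩ : ∃ t, d = t + 2 := ⟨d - 2, by omega⟩
    obtain ⟨g, hg⟩ := Nat.even_mul_succ_self t
    refine ⟨g, ?_⟩
    have : (t + 2 - 1) * (t + 2 - 2) = t * (t + 1) := by
      rw [mul_comm]; rfl
    rw [this, hg]; ring
  have hκp : κ ≤ p := by omega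
  have hκ0 : 1 ≤ κ := by omega
  obtain ⟨k, hk⟩ : ∃ k, k = Nat.sqrt κ := ⟨_, rfl⟩
  have hkp : k ≤ p := by rw [hk]; exact (Nat.sqrt_le_self _).trans hκp
  have hk1 : k ^ 2 ≤ κ := by rw [hk]; exact Nat.sqrt_le' _
  have hk2 : κ < (k + 1) ^ 2 := by rw [hk]; exact Nat.lt_succ_sqrt' _
  have hk0 : 1 ≤ k := by
    rw [hk]; exact Nat.sqrt_pos.mpr hκ0
  obtain ⟨x, hx0, hx1, hx2, hx3, hx4⟩ := param_exists d κ k r g hd hg hk1 hk2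
    (by omega) (by rw [← hqκ]; exact hq)
  have hdR : (3:ℝ) ≤ d := by exact_mod_cast hd
  have hkR : (1:ℝ) ≤ k := by exact_mod_cast hk0
  have hrR : (1:ℝ) ≤ r := by exact_mod_cast hr1
  have hxR : (1:ℝ) ≤ x := by exact_mod_cast hx0
  have hg1 : 1 ≤ g := by
    have : 2 * 1 ≤ (d - 1) * (d - 2) := Nat.mul_le_mul (by omega) (by omega)
    omega
  have hgR : (1:ℝ) ≤ g := by exact_mod_cast hg1
  have hqR : (q:ℝ) = κ * r ^ 2 := by rw [hqκ]; push_cast; ring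
  have hRbig : (d:ℝ) ^ 3 + d ^ 2 - 4 * d - 2 ≤ d * (d - 1) ^ 3 := by
    obtain ⟨t, ht⟩ : ∃ t : ℝ, (d:ℝ) = 3 + t := ⟨d - 3, by ring⟩
    have ht0 : 0 ≤ t := by linarith
    rw [ht]
    have : 0 ≤ (3 + t) * (3 + t - 1) ^ 3 - ((3 + t) ^ 3 + (3 + t) ^ 2 - 4 * (3 + t) - 2) := by
      have e : (3 + t) * (3 + t - 1) ^ 3 - ((3 + t) ^ 3 + (3 + t) ^ 2 - 4 * (3 + t) - 2) =
        t ^ 4 + 8 * t ^ 3 + 20 * t ^ 2 + 15 * t + 2 := by ring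
      rw [e]; positivity
    linarith
  have hκr : (d:ℝ) ^ 2 + 1 ≤ κ * r := by
    have h1 : (d:ℝ) * (d - 1) ^ 3 ≤ k * (d * (d - 1) ^ 3) := by
      apply le_mul_of_one_le_left _ hkR
      have : (0:ℝ) ≤ d - 1 := by linarith
      positivity
    have h2 : (d:ℝ) ^ 2 + 1 ≤ d ^ 3 + d ^ 2 - 4 * d - 2 := by nlinarith [mul_self_nonneg ((d:ℝ) - 3)]
    linarith
  have hκrN : d ^ 2 + 1 ≤ κ * r := by exact_mod_cast hκr
  have hM : d ^ 2 ≤ k * r := by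
    have : (d:ℝ) ^ 2 ≤ k * r := by
      have hD : (0:ℝ) ≤ d * (d - 1) - 2 := by nlinarith
      have : (2:ℝ) * (d * (d - 1) - 2) ≤ (x + g) * (d * (d - 1) - 2) :=
        mul_le_mul_of_nonneg_right (by linarith) hD
      nlinarith
    exact_mod_cast this
  have hq1 : d * r * d + 1 ≤ q := by
    rw [hqκ]
    have := Nat.mul_le_mul_right r hκrN
    nlinarith
  -- bound for the size of S
  have hbound : S.card ≠ 0 → (S.card - 1) * (k * r) < q * (k * r + x + g) := by
    intro hne
    obtain ⟨P, hP⟩ := Finset.card_ne_zero.mp hne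
    obtain ⟨L, hLd⟩ : ∃ L, L = (q - 1) / (d * r) := ⟨_, rfl⟩
    have hdr : 0 < d * r := Nat.mul_pos (by omega) (by omega)
    have hL1 : d * r * L ≤ q - 1 := by rw [hLd]; exact Nat.mul_div_le _ _
    have hL2 : q - 1 < d * r * (L + 1) := by
      rw [hLd]; exact Nat.lt_mul_div_succ _ hdr
    have hLge : d ≤ L := by
      rw [hLd, Nat.le_div_iff_mul_le hdr, mul_comm]; omega
    obtain ⟨l, rfl⟩ : ∃ l, L = l + d := ⟨L - d, by omega⟩
    obtain ⟨B, hB⟩ : ∃ B, B + 1 = k * r + x + g := ⟨k * r + x + g - 1, by omega⟩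
    obtain ⟨mm, hmmd⟩ : ∃ mm, mm = (B + d - 1) / d := ⟨_, rfl⟩
    have hd0 : 0 < d := by omega
    have hm1 : d * mm ≤ B + d - 1 := by rw [hmmd]; exact Nat.mul_div_le _ _
    have hm2 : B + d - 1 < d * (mm + 1) := by rw [hmmd]; exact Nat.lt_mul_div_succ _ hd0
    have hm3 : B ≤ d * mm := by
      have : d * (mm + 1) = d * mm + d := by ring
      omega
    have hmge : d ≤ mm := by
      rw [hmmd, Nat.le_div_iff_mul_le hd0, ← pow_two]; omega
    obtain ⟨m, rfl⟩ : ∃ m, mm = m + d := ⟨mm - d, by omega⟩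
    obtain ⟨e, he⟩ : ∃ e, d * (m + d) = B + e := ⟨d * (m + d) - B, by omega⟩
    have hgL : g ≤ d * (l + d) + 1 := by
      have : (d - 1) * (d - 2) ≤ d * (l + d) := Nat.mul_le_mul (by omega) (by omega)
      omega
    obtain ⟨nI, hnI⟩ : ∃ nI, nI + g = d * (l + d) + 1 := ⟨d * (l + d) + 1 - g, by omega⟩
    have hcnt := count_nat d g κ k r x (l + d) (m + d) nI hd hg hk0 hr1 hx1 hx2 hx3 hx4
      (by rw [← hqκ]; omega) (by omega) hnI
    have key := stepanov p μ hF hirr (by omega) S hS P hP k l m e nI (k * r + x) hkp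
      (by
        rw [← hrd, ← hqd, hqκ]
        have h1 : k ≤ κ := le_trans (by nlinarith) hk1
        have h2 : r ≤ r ^ 2 := by nlinarith
        exact Nat.mul_le_mul h1 h2)
      (by
        rw [← hrd, ← hqd]
        have : d * (l + d) * r = d * r * (l + d) := by ring
        omega)
      (choose_count d g l nI hd hg hnI)
      (choose_count d g m (k * r + x + e) hd hg (by omega))
      (by rw [← hrd]; exact hcnt)
    rw [← hrd, ← hqd] at key
    have e1 : d * ((l + d) * r + (m + d) * q) = d * r * (l + d) + q * (d * (m + d)) := by ring
    rw [e1, he, mul_add q B e] at key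
    rw [← hB, mul_add]
    omega
  -- final contradiction
  have hMpos : (0:ℝ) < k * r := by positivity
  have hqpos : (0:ℝ) < q := by
    have : 0 < q := by omega
    exact_mod_cast this
  have hNs : (N:ℝ) ≤ q + 1 + (d + q * (x + g) / (k * r)) := by
    have hnn : (0:ℝ) ≤ q * (x + g) / (k * r) := by positivity
    have hNR : (N:ℝ) ≤ S.card + d := by exact_mod_cast hN
    by_cases h0 : S.card = 0
    · rw [h0] at hNR
      push_cast at hNR
      linarith
    · have hb := hbound h0
      have hbR : ((S.card:ℝ) - 1) * (k * r) < q * (k * r + x + g) := by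
        have : (((S.card - 1) * (k * r) : ℕ) : ℝ) < ((q * (k * r + x + g) : ℕ) : ℝ) := by
          exact_mod_cast hb
        rw [Nat.cast_mul, Nat.cast_sub (by omega)] at this
        push_cast at this
        exact this
      have : (S.card:ℝ) - 1 < q * (k * r + x + g) / (k * r) := by
        rw [lt_div_iff₀ hMpos]; exact hbR
      have e : (q:ℝ) * (k * r + x + g) / (k * r) = q + q * (x + g) / (k * r) := by
        field_simp
        ring
      linarith
  have hsb : ((d:ℝ) + q * (x + g) / (k * r)) * (d * (d - 1) - 2) + 2 * (d * (d - 1) - 1) ≤ q := by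
    have h1 : (q:ℝ) * (x + g) / (k * r) * (d * (d - 1) - 2) ≤ q - q / (k * r) := by
      have e1 : (q:ℝ) * (x + g) / (k * r) * (d * (d - 1) - 2) =
        q * ((x + g) * (d * (d - 1) - 2)) / (k * r) := by ring
      have e2 : (q:ℝ) - q / (k * r) = q * (k * r - 1) / (k * r) := by field_simp
      rw [e1, e2]
      apply div_le_div_of_nonneg_right _ hMpos.le
      apply mul_le_mul_of_nonneg_left _ hqpos.le
      linarith
    have h2 : (d:ℝ) ^ 3 + d ^ 2 - 4 * d - 2 ≤ q / (k * r) := by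
      refine hRbig.trans ?_
      rw [le_div_iff₀ hMpos, hqR]
      have := mul_le_mul_of_nonneg_right hx4 (show (0:ℝ) ≤ r by linarith)
      linarith
    linarith
  have hfin := final_real ((d:ℝ) * (d - 1)) q (d + q * (x + g) / (k * r)) N (by nlinarith)
    (by positivity) hqpos hsb hNs
  have hfR : (N:ℝ) * (N - 1) ≤ (d * (d - 1)) * (N * (q + 1) - (q ^ 2 + q + 1)) := by
    have : (((N:ℤ) * (N - 1) : ℤ) : ℝ) ≤ (((d * (d - 1) : ℕ) *
      (N * (q + 1) - (q ^ 2 + q + 1)) : ℤ) : ℝ) := by exact_mod_cast hfill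
    push_cast [Nat.cast_sub (show 1 ≤ d by omega)] at this
    exact this
  linarith

theorem low_degree_not_tangent_filling
    (K : Type*) [Field K] [Fintype K] (d : ℕ) (hd : 2 ≤ d)
    (F : MvPolynomial (Fin 3) K) (hF : F.IsHomogeneous d)
    (hirr : Irreducible F)
    (hpd : d < ringChar K)
    (hq : d ^ 2 * (d - 1) ^ 6 ≤ Fintype.card K) :
    ¬ TangentFilling F := by
  intro hfill
  have := ringChar.charP K
  obtain ⟨α, hprime, hcard⟩ := FiniteField.card K (ringChar K)
  have : Fact (ringChar K).Prime := ⟨hprime⟩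
  have hp : ∀ n : ℕ, 0 < n → n ≤ d → (n:K) ≠ 0 := by
    intro n h0 h1 h2
    rw [CharP.cast_eq_zero_iff K (ringChar K)] at h2
    have := Nat.le_of_dvd h0 h2
    omega
  obtain ⟨S, N, hS, hN, hineq⟩ := filling_main hd hF hirr hp hfill
  rcases Nat.lt_or_ge 2 d with h3 | h2
  · exact main_ge3 h3 hF hirr (ringChar K) α hcard hpd hq S hS N hN hineq
  · have hd2 : d = 2 := by omega
    subst hd2
    have hq4 : (4:ℤ) ≤ Fintype.card K := by
      have : 4 ≤ Fintype.card K := by simpa using hq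
      exact_mod_cast this
    norm_num at hineq
    nlinarith [sq_nonneg (2 * (N:ℤ) - (2 * Fintype.card K + 3))]
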